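/- arXiv:2104.07027 — 4 statements merged into one kernel-verified Lean document; each statement's English description precedes it below -/
import Mathlib

section
/- Let n ≥ 1, p ∈ (0,∞) with p ≠ 2, θ ∈ (−π, π], and let U ∈ Mₙ(ℂ) be unitary. Then the identity ‖U − (2P − I)‖_p^p = τ(P)·(2 − 2cos θ)^{p/2} + (1 − τ(P))·(2 + 2cos θ)^{p/2} holds for every projection P ∈ Mₙ(ℂ) if and only if U = e^{iθ}·I or U = e^{−iθ}·I. -/
open Matrix
open scoped ComplexOrder

/-- The normalized trace `L^p`-(quasi-)norm `(τ(|A|^p))^{1/p}` of a complex matrix,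
computed via the eigenvalues of `Aᴴ * A`: the eigenvalues of `|A|^p` are the
`(p/2)`-th powers of those of `Aᴴ * A`, and the trace of a Hermitian matrix is the
sum of its eigenvalues. -/
noncomputable def lpnorm {m : Type*} [Fintype m] [DecidableEq m] (p : ℝ)
    (A : Matrix m m ℂ) : ℝ :=
  ((∑ i, ((Matrix.posSemidef_conjTranspose_mul_self A).isHermitian.eigenvalues i) ^ (p / 2)) /
      (Fintype.card m : ℝ)) ^ (1 / p)

/-- The `ℓ² → ℓ²` operator norm of a complex matrix. -/
noncomputable def l2opNorm {m : Type*} [Fintype m] [DecidableEq m]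
    (A : Matrix m m ℂ) : ℝ :=
  ‖Matrix.toEuclideanCLM (𝕜 := ℂ) A‖

/-!
For a unitary `U` and a projection `P`, `|U - (2P - 1)|² = 2 + (U + Uᴴ) - 2(UᴴP + PU)`. At `P = 0`
and `P = 1` this is `2 ± (U + Uᴴ)`, whose `p/2`-moments are prescribed; as the two matrices add up
to a scalar, the equality case of Jensen's inequality forces `U + Uᴴ = 2 cos θ`. The spectrum of `U`
then lies in `{e^{iθ}, e^{-iθ}}`. If both points occur, the skew-Hermitian part of `U` has an
isotropic vector `v`, and for `P` the projection onto `v` the eigenvalues of `|U - (2P - 1)|²` are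
`0`, `4` and `2 + 2 cos θ` (with multiplicity `n - 2`). The identity would then say
`(2 - 2 cos θ)^{p/2} + (2 + 2 cos θ)^{p/2} = 4^{p/2}`, which is impossible for `p ≠ 2`.
-/

section PowerMeans

theorem add_rpow_ne_rpow_add {a b q : ℝ} (ha : 0 < a) (hb : 0 < b) (hq : q ≠ 1) :
    a ^ q + b ^ q ≠ (a + b) ^ q := by
  have hab : 0 < a + b := add_pos ha hb
  have ha1 : a / (a + b) < 1 := (div_lt_one hab).2 (by linarith)
  have hb1 : b / (a + b) < 1 := (div_lt_one hab).2 (by linarith)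
  have hone : a / (a + b) + b / (a + b) = 1 := by rw [← add_div, div_self hab.ne']
  intro h
  have hone' : (a / (a + b)) ^ q + (b / (a + b)) ^ q = 1 := by
    rw [Real.div_rpow ha.le hab.le, Real.div_rpow hb.le hab.le, ← add_div, h,
      div_self (Real.rpow_pos_of_pos hab q).ne']
  rcases hq.lt_or_gt with hq | hq <;>
  · have hpa := Real.rpow_lt_rpow_of_exponent_gt (div_pos ha hab) ha1 hq
    have hpb := Real.rpow_lt_rpow_of_exponent_gt (div_pos hb hab) hb1 hq
    rw [Real.rpow_one] at hpa hpb
    linarith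

variable {ι : Type*} [Fintype ι] {w a b : ι → ℝ} {α β : ℝ}

-- Jensen bounds the means of `a` and `b` by `α` and `β` on the same side; since these means add up
-- to `α + β`, both bounds are attained.
theorem eq_of_strictConvexOn_of_add_eq {s : Set ℝ} {f : ℝ → ℝ} (hf : StrictConvexOn ℝ s f)
    (hmono : StrictMonoOn f s ∨ StrictAntiOn f s) (hw₀ : ∀ i, 0 < w i) (hw₁ : ∑ i, w i = 1)
    (hα : α ∈ s) (hβ : β ∈ s) (ha : ∀ i, a i ∈ s) (hb : ∀ i, b i ∈ s)
    (hab : ∀ i, a i + b i = α + β) (hfa : ∑ i, w i • f (a i) = f α)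
    (hfb : ∑ i, w i • f (b i) = f β) (i : ι) : a i = α := by
  have hmem : ∀ {x : ι → ℝ}, (∀ i, x i ∈ s) → ∑ i, w i • x i ∈ s := fun hx ↦
    hf.1.sum_mem (fun i _ ↦ (hw₀ i).le) hw₁ fun i _ ↦ hx i
  have hJa : f (∑ i, w i • a i) ≤ f α := by
    rw [← hfa]
    exact hf.convexOn.map_sum_le (fun i _ ↦ (hw₀ i).le) hw₁ fun i _ ↦ ha i
  have hJb : f (∑ i, w i • b i) ≤ f β := by
    rw [← hfb]
    exact hf.convexOn.map_sum_le (fun i _ ↦ (hw₀ i).le) hw₁ fun i _ ↦ hb i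
  have hsum : ∑ i, w i • a i + ∑ i, w i • b i = α + β := by
    simp only [← Finset.sum_add_distrib, ← smul_add, hab, ← Finset.sum_smul, hw₁, one_smul]
  have hmean : ∑ i, w i • a i = α := by
    rcases hmono with hmono | hmono
    · rw [hmono.le_iff_le (hmem ha) hα] at hJa
      rw [hmono.le_iff_le (hmem hb) hβ] at hJb
      linarith
    · rw [hmono.le_iff_ge (hmem ha) hα] at hJa
      rw [hmono.le_iff_ge (hmem hb) hβ] at hJb
      linarith
  have hconst := (hf.map_sum_eq_iff (fun i _ ↦ hw₀ i) hw₁ fun i _ ↦ ha i).1 (by rw [hmean, hfa])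
  rw [hconst i (Finset.mem_univ i), hmean]

theorem eq_of_sum_rpow_eq_of_add_eq {q : ℝ} (hq : 0 < q) (hq1 : q ≠ 1) (hw₀ : ∀ i, 0 < w i)
    (hw₁ : ∑ i, w i = 1) (hα : 0 ≤ α) (hβ : 0 ≤ β) (ha : ∀ i, 0 ≤ a i) (hb : ∀ i, 0 ≤ b i)
    (hab : ∀ i, a i + b i = α + β) (hqa : ∑ i, w i * a i ^ q = α ^ q)
    (hqb : ∑ i, w i * b i ^ q = β ^ q) (i : ι) : a i = α := by
  have hmono := Real.strictMonoOn_rpow_Ici_of_exponent_pos hq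
  rcases hq1.lt_or_gt with hlt | hgt
  · exact eq_of_strictConvexOn_of_add_eq (Real.strictConcaveOn_rpow hq hlt).neg (.inr hmono.neg)
      hw₀ hw₁ hα hβ ha hb hab (by simp [hqa]) (by simp [hqb]) i
  · exact eq_of_strictConvexOn_of_add_eq (strictConvexOn_rpow hgt) (.inl hmono) hw₀ hw₁ hα hβ
      ha hb hab hqa hqb i

end PowerMeans

section OrthogonalIdempotents

variable {K A κ ι : Type*} [Fintype κ] [Fintype ι]

theorem sum_smul_mul_of_orthogonalIdempotents [CommSemiring K] [Semiring A] [Algebra K A]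
    {Q : κ → A} (hQ : OrthogonalIdempotents Q) (d : κ → K) (k : κ) :
    (∑ j, d j • Q j) * Q k = d k • Q k := by
  classical
  simp [Finset.sum_mul, hQ.mul_eq]

theorem mul_sum_smul_of_orthogonalIdempotents [CommSemiring K] [Semiring A] [Algebra K A]
    {Q : κ → A} (hQ : OrthogonalIdempotents Q) (d : κ → K) (k : κ) :
    Q k * ∑ j, d j • Q j = d k • Q k := by
  classical
  simp [Finset.mul_sum, hQ.mul_eq]

-- The functional calculus does not depend on the decomposition: `Q k * R i = 0` if `d k ≠ e i`.
theorem sum_map_smul_eq_of_sum_smul_eq [Field K] [Ring A] [Algebra K A] {Q : κ → A} {R : ι → A}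
    (hQ : CompleteOrthogonalIdempotents Q) (hR : CompleteOrthogonalIdempotents R) {d : κ → K}
    {e : ι → K} (h : ∑ k, d k • Q k = ∑ i, e i • R i) (f : K → K) :
    ∑ k, f (d k) • Q k = ∑ i, f (e i) • R i := by
  have hmix : ∀ k i, f (d k) • (Q k * R i) = f (e i) • (Q k * R i) := fun k i ↦ by
    have hde : d k • (Q k * R i) = e i • (Q k * R i) := by
      rw [← smul_mul_assoc, ← mul_sum_smul_of_orthogonalIdempotents hQ.toOrthogonalIdempotents,
        h, mul_assoc, sum_smul_mul_of_orthogonalIdempotents hR.toOrthogonalIdempotents,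
        mul_smul_comm]
    rcases eq_or_ne (d k) (e i) with hd | hd
    · rw [hd]
    · have hzero : (d k - e i) • (Q k * R i) = 0 := by rw [sub_smul, hde, sub_self]
      rw [(smul_eq_zero.1 hzero).resolve_left (sub_ne_zero.2 hd), smul_zero, smul_zero]
  calc ∑ k, f (d k) • Q k = ∑ k, ∑ i, f (d k) • (Q k * R i) := by
        simp only [← Finset.smul_sum, ← Finset.mul_sum, hR.complete, mul_one]
    _ = ∑ i, ∑ k, f (e i) • (Q k * R i) := by
        simp only [hmix]
        exact Finset.sum_comm
    _ = ∑ i, f (e i) • R i := by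
        simp only [← Finset.smul_sum, ← Finset.sum_mul, hQ.complete, one_mul]

end OrthogonalIdempotents

section Hermitian

variable {m κ 𝕜 : Type*} [Fintype m] [DecidableEq m] [Fintype κ] [RCLike 𝕜]

theorem exists_completeOrthogonalIdempotents_of_isHermitian {H : Matrix m m 𝕜}
    (hH : H.IsHermitian) :
    ∃ Q : m → Matrix m m 𝕜, CompleteOrthogonalIdempotents Q ∧ (∀ i, (Q i).trace = 1) ∧
      H = ∑ i, hH.eigenvalues i • Q i := by
  let φ : (m → 𝕜) →ₐ[𝕜] Matrix m m 𝕜 :=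
    (Unitary.conjStarAlgAut 𝕜 _ hH.eigenvectorUnitary).toAlgEquiv.toAlgHom.comp
      (diagonalAlgHom 𝕜)
  have hφ : ∀ x, φ x = hH.eigenvectorUnitary * diagonal x *
      star (hH.eigenvectorUnitary : Matrix m m 𝕜) := fun _ ↦ rfl
  refine ⟨fun i ↦ φ (Pi.single i 1),
    (CompleteOrthogonalIdempotents.single fun _ : m ↦ 𝕜).map (φ : (m → 𝕜) →+* Matrix m m 𝕜),
    fun i ↦ ?_, ?_⟩
  · beta_reduce
    rw [hφ, trace_mul_comm, ← mul_assoc, Unitary.coe_star_mul_self, one_mul, trace_diagonal,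
      Finset.sum_pi_single', if_pos (Finset.mem_univ i)]
  · have hsum : RCLike.ofReal ∘ hH.eigenvalues =
        ∑ i, (hH.eigenvalues i : 𝕜) • Pi.single (M := fun _ ↦ 𝕜) i 1 := by
      simp only [← Pi.single_smul, smul_eq_mul, mul_one]
      exact (Finset.univ_sum_single _).symm
    calc H = φ (RCLike.ofReal ∘ hH.eigenvalues) := hH.spectral_theorem
      _ = ∑ i, hH.eigenvalues i • φ (Pi.single i 1) := by
        simp only [hsum, map_sum, map_smul, RCLike.real_smul_eq_coe_smul (K := 𝕜)]

theorem nonneg_of_posSemidef_sum_smul {Q : κ → Matrix m m 𝕜} (hQ : OrthogonalIdempotents Q)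
    {d : κ → ℝ} (hH : (∑ k, d k • Q k).PosSemidef) {k : κ} (hk : Q k ≠ 0) : 0 ≤ d k := by
  have hle : 0 ≤ ((Q k)ᴴ * (d k • Q k)).trace := by
    rw [← sum_smul_mul_of_orthogonalIdempotents hQ, ← mul_assoc]
    exact (hH.conjTranspose_mul_mul_same (Q k)).trace_nonneg
  have hpos : 0 < ((Q k)ᴴ * Q k).trace :=
    (posSemidef_conjTranspose_mul_self (Q k)).trace_nonneg.lt_of_ne'
      (trace_conjTranspose_mul_self_eq_zero_iff.not.2 hk)
  rw [mul_smul_comm, trace_smul] at hle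
  exact le_of_smul_le_smul_of_pos_right (by rwa [zero_smul]) hpos

theorem sum_map_eigenvalues_eq_sum_trace {H : Matrix m m 𝕜} (hH : H.IsHermitian)
    {Q : κ → Matrix m m 𝕜} (hQ : CompleteOrthogonalIdempotents Q) {d : κ → ℝ}
    (hd : H = ∑ k, d k • Q k) (f : ℝ → ℝ) :
    ∑ i, f (hH.eigenvalues i) = ∑ k, f (d k) * RCLike.re (Q k).trace := by
  obtain ⟨R, hR, hRtr, hHR⟩ := exists_completeOrthogonalIdempotents_of_isHermitian hH
  have htrace := congrArg (fun M ↦ RCLike.re M.trace)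
    (sum_map_smul_eq_of_sum_smul_eq hQ hR (hd.symm.trans hHR) f)
  simp only [trace_sum, trace_smul, map_sum, RCLike.smul_re, hRtr, RCLike.one_re,
    mul_one] at htrace
  exact htrace.symm

theorem star_eigenvectorBasis_dotProduct {H : Matrix m m 𝕜} (hH : H.IsHermitian) (i j : m) :
    star ⇑(hH.eigenvectorBasis i) ⬝ᵥ ⇑(hH.eigenvectorBasis j) = if i = j then 1 else 0 := by
  rw [dotProduct_comm, ← EuclideanSpace.inner_eq_star_dotProduct]
  exact orthonormal_iff_ite.1 hH.eigenvectorBasis.orthonormal i j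

theorem exists_isotropic_of_eigenvalues_add_eq_zero {H : Matrix m m 𝕜} (hH : H.IsHermitian)
    {i j : m} (hij : hH.eigenvalues i + hH.eigenvalues j = 0) :
    ∃ v ≠ 0, star v ⬝ᵥ H *ᵥ v = 0 := by
  have hinner := star_eigenvectorBasis_dotProduct hH
  refine ⟨⇑(hH.eigenvectorBasis i) + ⇑(hH.eigenvectorBasis j), fun hzero ↦ ?_, ?_⟩
  · have := congrArg (star ⇑(hH.eigenvectorBasis i) ⬝ᵥ ·) hzero
    simp only [dotProduct_add, hinner, dotProduct_zero, if_true] at this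
    split_ifs at this <;> norm_num at this
  · simp only [mulVec_add, hH.mulVec_eigenvectorBasis, star_add, add_dotProduct, dotProduct_add,
      dotProduct_smul, hinner, if_true, eq_comm (a := j) (b := i)]
    rw [← eq_neg_iff_add_eq_zero] at hij
    split_ifs <;> simp [hij]

theorem eigenvalues_sq_eq_of_mul_self_eq {H : Matrix m m 𝕜} (hH : H.IsHermitian) {t : ℝ}
    (hHH : H * H = t • (1 : Matrix m m 𝕜)) (i : m) : hH.eigenvalues i ^ 2 = t := by
  have hv : ⇑(hH.eigenvectorBasis i) ≠ 0 := fun h ↦ by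
    simpa [h] using star_eigenvectorBasis_dotProduct hH i i
  apply smul_left_injective ℝ hv
  calc hH.eigenvalues i ^ 2 • ⇑(hH.eigenvectorBasis i)
      = (H * H) *ᵥ ⇑(hH.eigenvectorBasis i) := by
        rw [← mulVec_mulVec, hH.mulVec_eigenvectorBasis, mulVec_smul, hH.mulVec_eigenvectorBasis,
          smul_smul, sq]
    _ = t • ⇑(hH.eigenvectorBasis i) := by rw [hHH, smul_mulVec, one_mulVec]

theorem eq_smul_one_of_eigenvalues_eq {H : Matrix m m 𝕜} (hH : H.IsHermitian) {t : ℝ}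
    (ht : ∀ i, hH.eigenvalues i = t) : H = t • (1 : Matrix m m 𝕜) := by
  obtain ⟨Q, hQ, -, hHQ⟩ := exists_completeOrthogonalIdempotents_of_isHermitian hH
  rw [hHQ]
  simp only [ht, ← Finset.smul_sum, hQ.complete]

theorem exists_isotropic_of_mul_self_eq {H : Matrix m m 𝕜} (hH : H.IsHermitian) {s : ℝ}
    (hHH : H * H = s ^ 2 • (1 : Matrix m m 𝕜)) (hpos : H ≠ s • (1 : Matrix m m 𝕜))
    (hneg : H ≠ -s • (1 : Matrix m m 𝕜)) : ∃ v ≠ 0, star v ⬝ᵥ H *ᵥ v = 0 := by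
  have hev : ∀ i, hH.eigenvalues i = s ∨ hH.eigenvalues i = -s := fun i ↦
    sq_eq_sq_iff_eq_or_eq_neg.1 (eigenvalues_sq_eq_of_mul_self_eq hH hHH i)
  obtain ⟨i, hi⟩ := not_forall.1 (mt (eq_smul_one_of_eigenvalues_eq hH) hpos)
  obtain ⟨j, hj⟩ := not_forall.1 (mt (eq_smul_one_of_eigenvalues_eq hH) hneg)
  apply exists_isotropic_of_eigenvalues_add_eq_zero hH (i := i) (j := j)
  rw [(hev i).resolve_left hi, (hev j).resolve_right hj, neg_add_cancel]

end Hermitian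

section LineProjection

variable {m 𝕜 : Type*} [Fintype m] [RCLike 𝕜]

/-- The orthogonal projection `v vᴴ / (vᴴ v)` onto the line spanned by `v`; it is `0` if `v = 0`. -/
noncomputable def lineProjection (v : m → 𝕜) : Matrix m m 𝕜 :=
  (star v ⬝ᵥ v)⁻¹ • vecMulVec v (star v)

theorem conjTranspose_lineProjection (v : m → 𝕜) : (lineProjection v)ᴴ = lineProjection v := by
  rw [lineProjection, conjTranspose_smul, conjTranspose_vecMulVec, star_star, star_inv₀,
    ← star_dotProduct_star, star_star]

theorem lineProjection_mul_lineProjection_eq_zero {v w : m → 𝕜} (h : star v ⬝ᵥ w = 0) :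
    lineProjection v * lineProjection w = 0 := by
  simp [lineProjection, vecMulVec_mul_vecMulVec, h]

theorem isIdempotentElem_lineProjection (v : m → 𝕜) : IsIdempotentElem (lineProjection v) := by
  rcases eq_or_ne (star v ⬝ᵥ v) 0 with h | h
  · simp [IsIdempotentElem, lineProjection, h]
  · simp [IsIdempotentElem, lineProjection, vecMulVec_mul_vecMulVec, vecMulVec_smul, smul_smul, h]

theorem trace_lineProjection {v : m → 𝕜} (hv : v ≠ 0) : (lineProjection v).trace = 1 := by
  rw [lineProjection, trace_smul, trace_vecMulVec, dotProduct_comm v, smul_eq_mul,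
    inv_mul_cancel₀ (dotProduct_star_self_eq_zero.not.2 hv)]

variable [DecidableEq m]

theorem orthogonalIdempotents_lineProjection_pair {v w : m → 𝕜} (h : star v ⬝ᵥ w = 0) :
    OrthogonalIdempotents ![lineProjection v, lineProjection w] where
  idem := Fin.forall_fin_two.2
    ⟨isIdempotentElem_lineProjection v, isIdempotentElem_lineProjection w⟩
  ortho := by
    have h' : star w ⬝ᵥ v = 0 := by rw [star_dotProduct, h, star_zero]
    simp [Pairwise, Fin.forall_fin_two, lineProjection_mul_lineProjection_eq_zero, h, h']

variable {U : Matrix m m 𝕜} {v : m → 𝕜} {c : ℝ}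

theorem star_add_smul_dotProduct_add_smul (hU : Uᴴ * U = 1)
    (hv : star v ⬝ᵥ U *ᵥ v = c * (star v ⬝ᵥ v)) (α β : ℝ) :
    star (v + α • Uᴴ *ᵥ v) ⬝ᵥ (v + β • Uᴴ *ᵥ v) =
      ((1 + (α + β) * c + α * β : ℝ) : 𝕜) * (star v ⬝ᵥ v) := by
  have hself : star (Uᴴ *ᵥ v) ⬝ᵥ (Uᴴ *ᵥ v) = star v ⬝ᵥ v := by
    rw [star_mulVec, conjTranspose_conjTranspose, ← dotProduct_mulVec, mulVec_mulVec,
      mul_eq_one_comm.1 hU, one_mulVec]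
  have hleft : star (Uᴴ *ᵥ v) ⬝ᵥ v = c * (star v ⬝ᵥ v) := by
    rw [star_mulVec, conjTranspose_conjTranspose, ← dotProduct_mulVec, hv]
  have hright : star v ⬝ᵥ (Uᴴ *ᵥ v) = c * (star v ⬝ᵥ v) := by
    have h := congrArg star hleft
    rwa [← star_dotProduct_star, star_star, star_mul', ← star_dotProduct_star, star_star,
      RCLike.star_def, RCLike.conj_ofReal] at h
  simp only [star_add, star_smul, star_trivial, add_dotProduct, dotProduct_add, smul_dotProduct,
    dotProduct_smul, hself, hleft, hright, RCLike.real_smul_eq_coe_mul]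
  push_cast
  ring

theorem star_add_smul_dotProduct_self (hU : Uᴴ * U = 1)
    (hv : star v ⬝ᵥ U *ᵥ v = c * (star v ⬝ᵥ v)) {ε : ℝ} (hε : ε * ε = 1) :
    star (v + ε • Uᴴ *ᵥ v) ⬝ᵥ (v + ε • Uᴴ *ᵥ v) =
      ((1 + ε * c : ℝ) : 𝕜) * (2 * (star v ⬝ᵥ v)) := by
  have hscal : 1 + (ε + ε) * c + ε * ε = (1 + ε * c) * 2 := by rw [hε]; ring
  rw [star_add_smul_dotProduct_add_smul hU hv, hscal, RCLike.ofReal_mul, RCLike.ofReal_ofNat,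
    mul_assoc]

theorem add_smul_conjTranspose_mulVec_ne_zero (hU : Uᴴ * U = 1)
    (hv : star v ⬝ᵥ U *ᵥ v = c * (star v ⬝ᵥ v)) {ε : ℝ} (hε : ε * ε = 1) (hεc : 1 + ε * c ≠ 0)
    (hv₀ : v ≠ 0) : v + ε • Uᴴ *ᵥ v ≠ 0 := by
  rw [Ne, ← dotProduct_star_self_eq_zero, star_add_smul_dotProduct_self hU hv hε]
  exact mul_ne_zero (RCLike.ofReal_ne_zero.2 hεc)
    (mul_ne_zero two_ne_zero (dotProduct_star_self_eq_zero.not.2 hv₀))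

theorem smul_lineProjection_add_smul (hU : Uᴴ * U = 1)
    (hv : star v ⬝ᵥ U *ᵥ v = c * (star v ⬝ᵥ v)) {ε : ℝ} (hε : ε * ε = 1) (hεc : 1 + ε * c ≠ 0) :
    (1 + ε * c) • lineProjection (v + ε • Uᴴ *ᵥ v) =
      (2 * (star v ⬝ᵥ v))⁻¹ • vecMulVec (v + ε • Uᴴ *ᵥ v) (star (v + ε • Uᴴ *ᵥ v)) := by
  rw [lineProjection, star_add_smul_dotProduct_self hU hv hε,
    RCLike.real_smul_eq_coe_smul (K := 𝕜), smul_smul, mul_inv,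
    mul_inv_cancel_left₀ (RCLike.ofReal_ne_zero.2 hεc)]

theorem conjTranspose_mul_lineProjection_add_lineProjection_mul (hU : Uᴴ * U = 1)
    (hc : c ∈ Set.Ioo (-1) 1) (hv : star v ⬝ᵥ U *ᵥ v = c * (star v ⬝ᵥ v)) :
    Uᴴ * lineProjection v + lineProjection v * U =
      (1 + c) • lineProjection (v + Uᴴ *ᵥ v) - (1 - c) • lineProjection (v - Uᴴ *ᵥ v) := by
  have hplus := smul_lineProjection_add_smul hU hv (ε := 1) (by norm_num) (by linarith [hc.1])
  have hminus := smul_lineProjection_add_smul hU hv (ε := -1) (by norm_num) (by linarith [hc.2])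
  simp only [one_mul, neg_mul, one_smul, neg_smul, ← sub_eq_add_neg] at hplus hminus
  have hpolar : vecMulVec (v + Uᴴ *ᵥ v) (star (v + Uᴴ *ᵥ v)) -
      vecMulVec (v - Uᴴ *ᵥ v) (star (v - Uᴴ *ᵥ v)) =
      (2 : 𝕜) • (vecMulVec (Uᴴ *ᵥ v) (star v) + vecMulVec v (star (Uᴴ *ᵥ v))) := by
    simp only [star_add, star_sub, vecMulVec_add, add_vecMulVec, vecMulVec_sub, sub_vecMulVec]
    module
  rw [hplus, hminus, ← smul_sub, hpolar, smul_smul, mul_inv, mul_comm (2 : 𝕜)⁻¹,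
    inv_mul_cancel_right₀ two_ne_zero, lineProjection, mul_smul_comm, smul_mul_assoc, ← smul_add,
    mul_vecMulVec, vecMulVec_mul, star_mulVec, conjTranspose_conjTranspose]

end LineProjection

section Unitary

variable {m 𝕜 : Type*} [Fintype m] [DecidableEq m] [RCLike 𝕜] {U : Matrix m m 𝕜} {c : ℝ}

theorem conjTranspose_mul_self_sub_symmetry {P : Matrix m m 𝕜} (hU : Uᴴ * U = 1) (hP : Pᴴ = P)
    (hPP : P * P = P) :
    (U - ((2 : 𝕜) • P - 1))ᴴ * (U - ((2 : 𝕜) • P - 1)) =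
      (2 : ℝ) • (1 : Matrix m m 𝕜) + (U + Uᴴ) - (2 : ℝ) • (Uᴴ * P + P * U) := by
  have htwo : (2 : 𝕜) • P = P + P := two_smul 𝕜 P
  rw [htwo]
  simp only [conjTranspose_sub, conjTranspose_add, conjTranspose_one, hP, sub_mul, mul_sub,
    add_mul, mul_add, one_mul, mul_one, hU, hPP]
  module

theorem eq_smul_one_of_add_conjTranspose_eq (hU : Uᴴ * U = 1)
    (hX : U + Uᴴ = (2 * c) • (1 : Matrix m m 𝕜)) (hc : c ^ 2 = 1) :
    U = c • (1 : Matrix m m 𝕜) := by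
  rw [← sub_eq_zero, ← conjTranspose_mul_self_eq_zero]
  calc (U - c • (1 : Matrix m m 𝕜))ᴴ * (U - c • (1 : Matrix m m 𝕜))
      = Uᴴ * U - c • (U + Uᴴ) + c ^ 2 • (1 : Matrix m m 𝕜) := by
        simp only [conjTranspose_sub, conjTranspose_smul, conjTranspose_one, star_trivial, sub_mul,
          mul_sub, smul_mul_assoc, mul_smul_comm, one_mul, mul_one]
        module
    _ = (1 - c ^ 2) • (1 : Matrix m m 𝕜) := by
        rw [hU, hX]
        module
    _ = 0 := by rw [hc, sub_self, zero_smul]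

end Unitary

section UnimodularScalar

variable {m : Type*} [DecidableEq m]

theorem smul_one_add_conjTranspose (z : ℂ) :
    z • (1 : Matrix m m ℂ) + (z • (1 : Matrix m m ℂ))ᴴ = (2 * z.re) • 1 := by
  rw [conjTranspose_smul, conjTranspose_one, ← add_smul, Complex.star_def, Complex.add_conj,
    Complex.coe_smul]

variable [Fintype m] {U : Matrix m m ℂ} {z : ℂ}

theorem re_sq_add_im_sq_of_norm_eq_one (hz : ‖z‖ = 1) : z.re ^ 2 + z.im ^ 2 = 1 := by
  rw [sq, sq, ← Complex.normSq_apply, Complex.normSq_eq_norm_sq, hz, one_pow]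

theorem re_mem_Ioo_of_ne_smul_one (hU : Uᴴ * U = 1)
    (hX : U + Uᴴ = (2 * z.re) • (1 : Matrix m m ℂ)) (hz : ‖z‖ = 1) (hne : U ≠ z • 1) :
    z.re ∈ Set.Ioo (-1) 1 := by
  have him : z.im ≠ 0 := fun him ↦ hne <| by
    have hre : z.re ^ 2 = 1 := by simpa [him] using re_sq_add_im_sq_of_norm_eq_one hz
    rw [eq_smul_one_of_add_conjTranspose_eq hU hX hre, ← Complex.coe_smul,
      Complex.ext (Complex.ofReal_re z.re) him.symm]
  exact abs_lt.1 ((sq_lt_one_iff_abs_lt_one _).1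
    (by linarith [re_sq_add_im_sq_of_norm_eq_one hz, sq_pos_of_ne_zero him]))

theorem exists_dotProduct_mulVec_eq_of_add_conjTranspose_eq (hU : Uᴴ * U = 1)
    (hX : U + Uᴴ = (2 * z.re) • (1 : Matrix m m ℂ)) (hz : ‖z‖ = 1) (hne : U ≠ z • 1)
    (hne' : U ≠ star z • 1) :
    ∃ v ≠ 0, star v ⬝ᵥ U *ᵥ v = z.re * (star v ⬝ᵥ v) := by
  have hUstar : Uᴴ = (2 * z.re) • (1 : Matrix m m ℂ) - U := eq_sub_of_add_eq' hX
  have hUU : U * U = (2 * z.re) • U - 1 := by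
    rw [hUstar, sub_mul, smul_mul_assoc, one_mul] at hU
    rw [← hU, sub_sub_cancel]
  let K := -Complex.I • (U - z.re • (1 : Matrix m m ℂ))
  have hUK : U = z.re • (1 : Matrix m m ℂ) + Complex.I • K := by
    simp only [K, smul_smul, mul_neg, Complex.I_mul_I, neg_neg, one_smul, add_sub_cancel]
  have hK : K.IsHermitian := by
    simp only [IsHermitian, K, conjTranspose_smul, conjTranspose_sub, conjTranspose_one,
      star_trivial, star_neg, Complex.star_def, Complex.conj_I, hUstar]
    module
  have hKK : K * K = z.im ^ 2 • (1 : Matrix m m ℂ) := by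
    have hsq : K * K = -((U - z.re • (1 : Matrix m m ℂ)) * (U - z.re • (1 : Matrix m m ℂ))) := by
      simp only [K, smul_mul_smul_comm, neg_mul_neg, Complex.I_mul_I, neg_one_smul]
    rw [hsq, eq_sub_of_add_eq' (re_sq_add_im_sq_of_norm_eq_one hz)]
    simp only [sub_mul, mul_sub, hUU, smul_mul_assoc, mul_smul_comm, one_mul, mul_one]
    module
  have hpos : K ≠ z.im • (1 : Matrix m m ℂ) := fun h ↦ hne <| by
    rw [hUK, h, ← Complex.coe_smul, ← Complex.coe_smul, smul_smul, ← add_smul, mul_comm,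
      Complex.re_add_im]
  have hneg : K ≠ -z.im • (1 : Matrix m m ℂ) := fun h ↦ hne' <| by
    have hconj : star z = z.re + Complex.I * (-z.im : ℝ) := Complex.ext (by simp) (by simp)
    rw [hUK, h, ← Complex.coe_smul, ← Complex.coe_smul, smul_smul, ← add_smul, hconj]
  obtain ⟨v, hv, hKv⟩ := exists_isotropic_of_mul_self_eq hK hKK hpos hneg
  refine ⟨v, hv, ?_⟩
  rw [hUK, add_mulVec, smul_mulVec, smul_mulVec, one_mulVec, dotProduct_add, dotProduct_smul,
    dotProduct_smul, hKv, smul_zero, add_zero, Complex.real_smul]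

end UnimodularScalar

section LpNorm

variable {m κ : Type*} [Fintype m] [DecidableEq m] [Fintype κ] {p c : ℝ} {U : Matrix m m ℂ}

theorem lpnorm_rpow_eq_sum_trace (hp : p ≠ 0) {A : Matrix m m ℂ} {Q : κ → Matrix m m ℂ}
    (hQ : CompleteOrthogonalIdempotents Q) {d : κ → ℝ} (hd : Aᴴ * A = ∑ k, d k • Q k) :
    lpnorm p A ^ p = ∑ k, (Q k).trace.re / Fintype.card m * d k ^ (p / 2) := by
  have hA := posSemidef_conjTranspose_mul_self A
  have hnonneg : 0 ≤ (∑ i, hA.isHermitian.eigenvalues i ^ (p / 2)) / Fintype.card m :=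
    div_nonneg (Finset.sum_nonneg fun i _ ↦ Real.rpow_nonneg (hA.eigenvalues_nonneg i) _)
      (Nat.cast_nonneg _)
  rw [lpnorm, ← Real.rpow_mul hnonneg, one_div_mul_cancel hp, Real.rpow_one,
    sum_map_eigenvalues_eq_sum_trace hA.isHermitian hQ hd (· ^ (p / 2)), Finset.sum_div]
  refine Finset.sum_congr rfl fun k _ ↦ ?_
  rw [mul_div_assoc, mul_comm, RCLike.re_to_complex]

theorem lpnorm_sub_symmetry_of_commute [Nonempty m] (hp : p ≠ 0) {P : Matrix m m ℂ}
    (hU : Uᴴ * U = 1) (hX : U + Uᴴ = (2 * c) • (1 : Matrix m m ℂ)) (hP : Pᴴ = P)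
    (hPP : P * P = P) (hUP : Commute U P) :
    lpnorm p (U - ((2 : ℂ) • P - 1)) ^ p =
      P.trace.re / Fintype.card m * (2 - 2 * c) ^ (p / 2) +
        (1 - P.trace.re / Fintype.card m) * (2 + 2 * c) ^ (p / 2) := by
  have hQ : CompleteOrthogonalIdempotents ![P, 1 - P] :=
    CompleteOrthogonalIdempotents.of_isIdempotentElem hPP
  have hd : (U - ((2 : ℂ) • P - 1))ᴴ * (U - ((2 : ℂ) • P - 1)) =
      ∑ k, ![2 - 2 * c, 2 + 2 * c] k • ![P, 1 - P] k := by
    rw [conjTranspose_mul_self_sub_symmetry hU hP hPP, ← hUP.eq, ← add_mul, add_comm Uᴴ, hX,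
      smul_mul_assoc, one_mul, Fin.sum_univ_two]
    simp only [cons_val_zero, cons_val_one]
    module
  have hcard : (Fintype.card m : ℝ) ≠ 0 := Nat.cast_ne_zero.2 Fintype.card_ne_zero
  rw [lpnorm_rpow_eq_sum_trace hp hQ hd, Fin.sum_univ_two]
  simp [sub_div, hcard]

theorem add_conjTranspose_eq_of_lpnorm [Nonempty m] (hp : 0 < p) (hp2 : p ≠ 2)
    (hc : c ∈ Set.Icc (-1) 1) (hU : Uᴴ * U = 1)
    (hadd : lpnorm p (U + 1) ^ p = (2 + 2 * c) ^ (p / 2))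
    (hsub : lpnorm p (U - 1) ^ p = (2 - 2 * c) ^ (p / 2)) :
    U + Uᴴ = (2 * c) • (1 : Matrix m m ℂ) := by
  have hX : (U + Uᴴ).IsHermitian := by
    rw [IsHermitian, conjTranspose_add, conjTranspose_conjTranspose, add_comm]
  obtain ⟨Q, hQ, hQtr, hXQ⟩ := exists_completeOrthogonalIdempotents_of_isHermitian hX
  have hQ₀ : ∀ i, Q i ≠ 0 := fun i h ↦ by simpa [h] using hQtr i
  have hplus : (U + 1)ᴴ * (U + 1) = ∑ i, (2 + hX.eigenvalues i) • Q i := by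
    simp only [add_smul, Finset.sum_add_distrib, ← hXQ, ← Finset.smul_sum, hQ.complete,
      conjTranspose_add, conjTranspose_one, add_mul, mul_add, one_mul, mul_one, hU]
    module
  have hminus : (U - 1)ᴴ * (U - 1) = ∑ i, (2 - hX.eigenvalues i) • Q i := by
    simp only [sub_smul, Finset.sum_sub_distrib, ← hXQ, ← Finset.smul_sum, hQ.complete,
      conjTranspose_sub, conjTranspose_one, sub_mul, mul_sub, one_mul, mul_one, hU]
    module
  rw [lpnorm_rpow_eq_sum_trace hp.ne' hQ hplus] at hadd
  rw [lpnorm_rpow_eq_sum_trace hp.ne' hQ hminus] at hsub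
  simp only [hQtr, Complex.one_re] at hadd hsub
  have hcard : (0 : ℝ) < Fintype.card m := Nat.cast_pos.2 Fintype.card_pos
  refine eq_smul_one_of_eigenvalues_eq hX fun i ↦ ?_
  have hi := eq_of_sum_rpow_eq_of_add_eq (half_pos hp) (by contrapose! hp2; linarith)
    (fun _ ↦ one_div_pos.2 hcard) (by simp [hcard.ne']) (by linarith [hc.1]) (by linarith [hc.2])
    (fun i ↦ nonneg_of_posSemidef_sum_smul hQ.toOrthogonalIdempotents
      (hplus ▸ posSemidef_conjTranspose_mul_self _) (hQ₀ i))
    (fun i ↦ nonneg_of_posSemidef_sum_smul hQ.toOrthogonalIdempotents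
      (hminus ▸ posSemidef_conjTranspose_mul_self _) (hQ₀ i)) (fun i ↦ by ring) hadd hsub i
  linarith

theorem lpnorm_sub_lineProjection_symmetry (hp : p ≠ 0) (hU : Uᴴ * U = 1)
    (hX : U + Uᴴ = (2 * c) • (1 : Matrix m m ℂ)) (hc : c ∈ Set.Ioo (-1) 1) {v : m → ℂ}
    (hv₀ : v ≠ 0) (hv : star v ⬝ᵥ U *ᵥ v = c * (star v ⬝ᵥ v)) :
    lpnorm p (U - ((2 : ℂ) • lineProjection v - 1)) ^ p =
      (4 ^ (p / 2) + (Fintype.card m - 2) * (2 + 2 * c) ^ (p / 2)) / Fintype.card m := by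
  have hx : v + Uᴴ *ᵥ v ≠ 0 := by
    have hne := add_smul_conjTranspose_mulVec_ne_zero hU hv (ε := 1) (by norm_num)
      (by linarith [hc.1]) hv₀
    rwa [one_smul] at hne
  have hy : v - Uᴴ *ᵥ v ≠ 0 := by
    have hne := add_smul_conjTranspose_mulVec_ne_zero hU hv (ε := -1) (by norm_num)
      (by linarith [hc.2]) hv₀
    rwa [neg_one_smul, ← sub_eq_add_neg] at hne
  have hxy : star (v + Uᴴ *ᵥ v) ⬝ᵥ (v - Uᴴ *ᵥ v) = 0 := by
    simpa [← sub_eq_add_neg] using star_add_smul_dotProduct_add_smul hU hv 1 (-1)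
  let Q := ![lineProjection (v + Uᴴ *ᵥ v), lineProjection (v - Uᴴ *ᵥ v)]
  have hQ : CompleteOrthogonalIdempotents (Option.elim · (1 - ∑ i, Q i) Q) :=
    .option (orthogonalIdempotents_lineProjection_pair hxy)
  have hd : (U - ((2 : ℂ) • lineProjection v - 1))ᴴ * (U - ((2 : ℂ) • lineProjection v - 1)) =
      ∑ k : Option (Fin 2), k.elim (2 + 2 * c) ![0, 4] • k.elim (1 - ∑ i, Q i) Q := by
    rw [conjTranspose_mul_self_sub_symmetry hU (conjTranspose_lineProjection v)
      (isIdempotentElem_lineProjection v), hX,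
      conjTranspose_mul_lineProjection_add_lineProjection_mul hU hc hv]
    simp only [Fintype.sum_option, Option.elim_none, Option.elim_some, Fin.sum_univ_two, Q,
      cons_val_zero, cons_val_one]
    module
  have hQtr : (1 - ∑ i, Q i).trace = Fintype.card m - 2 := by
    simp only [Q, Fin.sum_univ_two, cons_val_zero, cons_val_one, trace_sub, trace_add, trace_one,
      trace_lineProjection hx, trace_lineProjection hy, one_add_one_eq_two]
  rw [lpnorm_rpow_eq_sum_trace hp hQ hd, Fintype.sum_option, Option.elim_none, hQtr]
  simp only [Option.elim_none, Option.elim_some, Fin.sum_univ_two, Q, cons_val_zero, cons_val_one,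
    trace_lineProjection hx, trace_lineProjection hy, Complex.sub_re, Complex.natCast_re,
    Complex.re_ofNat, Complex.one_re, Real.zero_rpow (div_ne_zero hp two_ne_zero)]
  ring

theorem lpnorm_sub_lineProjection_symmetry_ne [Nonempty m] (hp : p ≠ 0) (hp2 : p ≠ 2)
    (hU : Uᴴ * U = 1) (hX : U + Uᴴ = (2 * c) • (1 : Matrix m m ℂ)) (hc : c ∈ Set.Ioo (-1) 1)
    {v : m → ℂ} (hv₀ : v ≠ 0) (hv : star v ⬝ᵥ U *ᵥ v = c * (star v ⬝ᵥ v)) :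
    lpnorm p (U - ((2 : ℂ) • lineProjection v - 1)) ^ p ≠
      1 / Fintype.card m * (2 - 2 * c) ^ (p / 2) +
        (1 - 1 / Fintype.card m) * (2 + 2 * c) ^ (p / 2) := by
  rw [lpnorm_sub_lineProjection_symmetry hp hU hX hc hv₀ hv]
  intro h
  have hcard : (Fintype.card m : ℝ) ≠ 0 := Nat.cast_ne_zero.2 Fintype.card_ne_zero
  have hsum : 2 - 2 * c + (2 + 2 * c) = 4 := by ring
  apply add_rpow_ne_rpow_add (q := p / 2) (by linarith [hc.2] : 0 < 2 - 2 * c)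
    (by linarith [hc.1] : 0 < 2 + 2 * c) (by contrapose! hp2; linarith)
  rw [hsum]
  generalize (2 - 2 * c) ^ (p / 2) = x at h ⊢
  generalize (2 + 2 * c) ^ (p / 2) = y at h ⊢
  field_simp at h
  linarith

end LpNorm

theorem stmt8_general {m : Type*} [Fintype m] [DecidableEq m] [Nonempty m] {p : ℝ} (hp : 0 < p)
    (hp2 : p ≠ 2) (θ : ℝ) {U : Matrix m m ℂ} (hU : U ∈ unitaryGroup m ℂ) :
    (∀ P : Matrix m m ℂ, Pᴴ = P → P * P = P →
        lpnorm p (U - ((2 : ℂ) • P - 1)) ^ p =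
          (P.trace.re / Fintype.card m) * (2 - 2 * Real.cos θ) ^ (p / 2) +
            (1 - P.trace.re / Fintype.card m) * (2 + 2 * Real.cos θ) ^ (p / 2)) ↔
      (U = Complex.exp (θ * Complex.I) • 1 ∨ U = Complex.exp (-θ * Complex.I) • 1) := by
  have hUU : Uᴴ * U = 1 := Unitary.star_mul_self_of_mem hU
  have hstar : Complex.exp (-θ * Complex.I) = star (Complex.exp (θ * Complex.I)) := by
    rw [Complex.star_def, ← Complex.exp_conj]
    simp
  rw [hstar, ← Complex.exp_ofReal_mul_I_re]
  have hz : ‖Complex.exp (θ * Complex.I)‖ = 1 := Complex.norm_exp_ofReal_mul_I θ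
  generalize Complex.exp (θ * Complex.I) = z at hz ⊢
  constructor
  · intro h
    have hX : U + Uᴴ = (2 * z.re) • (1 : Matrix m m ℂ) := by
      refine add_conjTranspose_eq_of_lpnorm hp hp2 (abs_le.1 (hz ▸ Complex.abs_re_le_norm z)) hUU
        ?_ ?_
      · simpa using h 0 conjTranspose_zero (mul_zero 0)
      · have htwo : (2 : ℂ) • (1 : Matrix m m ℂ) - 1 = 1 := by module
        simpa [htwo] using h 1 conjTranspose_one (mul_one 1)
    by_contra! hne
    obtain ⟨v, hv₀, hv⟩ := exists_dotProduct_mulVec_eq_of_add_conjTranspose_eq hUU hX hz hne.1 hne.2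
    have hline := h (lineProjection v) (conjTranspose_lineProjection v)
      (isIdempotentElem_lineProjection v)
    rw [trace_lineProjection hv₀, Complex.one_re] at hline
    exact lpnorm_sub_lineProjection_symmetry_ne hp.ne' hp2 hUU hX
      (re_mem_Ioo_of_ne_smul_one hUU hX hz hne.1) hv₀ hv hline
  · rintro (rfl | rfl) P hP hPP
    · exact lpnorm_sub_symmetry_of_commute hp.ne' hUU (smul_one_add_conjTranspose z) hP hPP
        ((Commute.one_left P).smul_left _)
    · exact lpnorm_sub_symmetry_of_commute hp.ne' hUU (smul_one_add_conjTranspose (star z)) hP hPP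
        ((Commute.one_left P).smul_left _)

/-- For `p ≠ 2`, `θ ∈ (−π, π]` and unitary `U`: the identity
`‖U − (2P − I)‖_p^p = τ(P)(2 − 2cos θ)^{p/2} + (1 − τ(P))(2 + 2cos θ)^{p/2}`
holds for every projection `P` iff `U = e^{iθ}I` or `U = e^{−iθ}I`. -/
theorem stmt8 (n : ℕ) (hn : 1 ≤ n) (p : ℝ) (hp : 0 < p) (hp2 : p ≠ 2)
    (θ : ℝ) (hθ : θ ∈ Set.Ioc (-Real.pi) Real.pi)
    (U : Matrix (Fin n) (Fin n) ℂ) (hU : U ∈ Matrix.unitaryGroup (Fin n) ℂ) :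
    (∀ P : Matrix (Fin n) (Fin n) ℂ, Pᴴ = P → P * P = P →
        lpnorm p (U - ((2 : ℂ) • P - 1)) ^ p =
          (P.trace.re / n) * (2 - 2 * Real.cos θ) ^ (p / 2) +
            (1 - P.trace.re / n) * (2 + 2 * Real.cos θ) ^ (p / 2)) ↔
      (U = Complex.exp (θ * Complex.I) • 1 ∨ U = Complex.exp (-θ * Complex.I) • 1) := by
  have : Nonempty (Fin n) := ⟨⟨0, hn⟩⟩
  simpa using stmt8_general hp hp2 θ hU
end

section
/- Let n ≥ 1, p ∈ (0,∞) with p ≠ 2, and let ψ : 𝒰(Mₙ(ℂ)) → 𝒰(Mₙ(ℂ)) be a surjective L^p-isometry with ψ(I) = I. Then either ψ(e^{iθ}·I) = e^{iθ}·I for every θ ∈ ℝ, or ψ(e^{iθ}·I) = e^{−iθ}·I for every θ ∈ ℝ. -/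
open Matrix
open scoped ComplexOrder

/-!
For `p ≠ 2` the function `t ↦ t ^ (p / 2)` is strictly convex or strictly concave. The squared
singular values `λ` of `U - 1` and `4 - λ` of `U + 1` have a constant sum, so the `L^p`-distances
from a unitary `U` to `1` and `-1` take the values they take at a unimodular `z` only if every `λ`
equals `‖z - 1‖²`, that is, if `U + Uᴴ = 2 re z`. As `ψ` fixes `1` and `-1`, it permutes each such
slice of the unitary group.

In the slice of a non-real `z` the matrix `z • 1` is isolated, because the nonzero singular values
of `U - z • 1` are all `2 |im z|`, whereas a non-scalar element is an accumulation point of its own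
unitary orbit. Hence `ψ (z • 1)` is one of the two scalars `z`, `conj z` of the slice, and comparing
distances with the image of `i` makes this choice the same for all `z`.
-/

section
variable {m 𝕜 : Type*} [Fintype m] [DecidableEq m] [RCLike 𝕜] {A B : Matrix m m 𝕜}

theorem trace_cfc_eq_sum_eigenvalues (hA : A.IsHermitian) (f : ℝ → ℝ) :
    (cfc f A).trace = ∑ i, (f (hA.eigenvalues i) : 𝕜) := by
  rw [hA.cfc_eq, IsHermitian.cfc, Unitary.conjStarAlgAut_apply, trace_mul_cycle,
    Unitary.coe_star_mul_self, one_mul, trace_diagonal]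
  rfl

theorem cfc_eq_cfc_iff_eigenvalues (hA : A.IsHermitian) (f g : ℝ → ℝ) :
    cfc f A = cfc g A ↔ ∀ i, f (hA.eigenvalues i) = g (hA.eigenvalues i) := by
  rw [cfc_eq_cfc_iff_eqOn hA.isSelfAdjoint (finite_real_spectrum.continuousOn f)
    (finite_real_spectrum.continuousOn g), hA.spectrum_real_eq_range_eigenvalues, Set.eqOn_range,
    funext_iff]
  rfl

theorem eq_smul_one_iff_eigenvalues_eq (hA : A.IsHermitian) {k : ℝ} :
    A = k • 1 ↔ ∀ i, hA.eigenvalues i = k := by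
  have h := cfc_eq_cfc_iff_eigenvalues hA id fun _ => k
  rwa [cfc_id ℝ A hA.isSelfAdjoint, cfc_const k A hA.isSelfAdjoint,
    Algebra.algebraMap_eq_smul_one] at h

theorem mul_self_eq_smul_iff_eigenvalues (hA : A.IsHermitian) {k : ℝ} :
    A * A = k • A ↔ ∀ i, hA.eigenvalues i = 0 ∨ hA.eigenvalues i = k := by
  have h := cfc_eq_cfc_iff_eigenvalues hA (fun x => x * x) (fun x => k * x)
  rw [cfc_mul (fun x => x) (fun x => x) A, cfc_const_mul k (fun x => x) A,
    cfc_id' ℝ A hA.isSelfAdjoint] at h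
  simp only [h, mul_eq_mul_right_iff, or_comm]

theorem sum_eigenvalues_const_sub (hA : A.IsHermitian) (hB : B.IsHermitian) {c : ℝ}
    (h : A + B = c • 1) (f : ℝ → ℝ) :
    ∑ i, f (hB.eigenvalues i) = ∑ i, f (c - hA.eigenvalues i) := by
  have hBA : cfc (fun x => c - x) A = B := by
    rw [cfc_sub (fun _ => c) (fun x => x) A, cfc_const c A hA.isSelfAdjoint,
      cfc_id' ℝ A hA.isSelfAdjoint, Algebra.algebraMap_eq_smul_one, ← h, add_sub_cancel_left]
  have hcomp : cfc f B = cfc (fun x => f (c - x)) A := by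
    rw [cfc_comp' f (fun x => c - x) A ((finite_real_spectrum.image _).continuousOn f), hBA]
  have htr := congrArg trace hcomp
  rw [trace_cfc_eq_sum_eigenvalues hA, trace_cfc_eq_sum_eigenvalues hB] at htr
  exact_mod_cast htr

open scoped MatrixOrder in
theorem eigenvalues_le_of_posSemidef_sub (hA : A.IsHermitian) {c : ℝ}
    (h : (c • 1 - A).PosSemidef) (i : m) : hA.eigenvalues i ≤ c := by
  rw [← Algebra.algebraMap_eq_smul_one, ← le_iff] at h
  exact (le_algebraMap_iff_spectrum_le hA.isSelfAdjoint).mp h _ (hA.eigenvalues_mem_spectrum_real i)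

end

theorem eq_of_strictConvexOn_of_sum_eq {E ι : Type*} [AddCommGroup E] [Module ℝ E] {t : Finset ι}
    {s : Set E} {f : E → ℝ} (hf : StrictConvexOn ℝ s f) {a b : ℝ} (ha : 0 < a) (hb : 0 < b)
    (hab : a + b = 1) {c : E} {u v : ι → E} (hu : ∀ i ∈ t, u i ∈ s) (hv : ∀ i ∈ t, v i ∈ s)
    (huv : ∀ i ∈ t, a • u i + b • v i = c) (hfu : ∑ i ∈ t, f (u i) = ∑ _i ∈ t, f c)
    (hfv : ∑ i ∈ t, f (v i) = ∑ _i ∈ t, f c) {i : ι} (hi : i ∈ t) : u i = c := by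
  have jensen : ∀ j ∈ t, f c ≤ a * f (u j) + b * f (v j) := fun j hj => by
    simpa only [huv j hj, smul_eq_mul] using hf.convexOn.2 (hu j hj) (hv j hj) ha.le hb.le hab
  have hsum : ∑ _j ∈ t, f c = ∑ j ∈ t, (a * f (u j) + b * f (v j)) := by
    rw [Finset.sum_add_distrib, ← Finset.mul_sum, ← Finset.mul_sum, hfu, hfv, ← add_mul, hab,
      one_mul]
  have heq := (Finset.sum_eq_sum_iff_of_le jensen).mp hsum i hi
  have huvi : u i = v i := by
    by_contra hne
    have hlt := hf.2 (hu i hi) (hv i hi) hne ha hb hab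
    simp only [smul_eq_mul, huv i hi] at hlt
    exact hlt.ne heq
  rw [← huv i hi, ← huvi, ← add_smul, hab, one_smul]

theorem eq_of_sum_rpow_eq_of_sum_sub_rpow_eq {ι : Type*} {t : Finset ι} {r c k : ℝ} (hr : 0 < r)
    (hr1 : r ≠ 1) (hk : 0 < k) (hkc : k < c) {x : ι → ℝ} (hx : ∀ i ∈ t, 0 ≤ x i)
    (hxc : ∀ i ∈ t, x i ≤ c) (h₁ : ∑ i ∈ t, x i ^ r = ∑ _i ∈ t, k ^ r)
    (h₂ : ∑ i ∈ t, (c - x i) ^ r = ∑ _i ∈ t, (c - k) ^ r) {i : ι} (hi : i ∈ t) : x i = k := by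
  have hc : 0 < c := hk.trans hkc
  have hck : 0 < c - k := sub_pos.mpr hkc
  have hu : ∀ j ∈ t, x j / k ∈ Set.Ici (0 : ℝ) := fun j hj => div_nonneg (hx j hj) hk.le
  have hv : ∀ j ∈ t, (c - x j) / (c - k) ∈ Set.Ici (0 : ℝ) := fun j hj =>
    div_nonneg (sub_nonneg.mpr (hxc j hj)) hck.le
  have hsum_div : ∀ {y : ι → ℝ} {l : ℝ}, 0 < l → (∀ j ∈ t, 0 ≤ y j) →
      ∑ j ∈ t, y j ^ r = ∑ _j ∈ t, l ^ r → ∑ j ∈ t, (y j / l) ^ r = ∑ _j ∈ t, (1 : ℝ) ^ r := by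
    intro y l hl hy h
    rw [Finset.sum_congr rfl fun j hj => Real.div_rpow (hy j hj) hl.le r, ← Finset.sum_div, h,
      Finset.sum_div, div_self (Real.rpow_pos_of_pos hl r).ne', Real.one_rpow]
  have hu1 := hsum_div hk hx h₁
  have hv1 := hsum_div hck (fun j hj => sub_nonneg.mpr (hxc j hj)) h₂
  have hmean : ∀ j ∈ t, k / c * (x j / k) + (c - k) / c * ((c - x j) / (c - k)) = 1 :=
    fun j _ => by field_simp; ring
  have hw : k / c + (c - k) / c = 1 := by field_simp; ring
  suffices x i / k = 1 from (div_eq_one_iff_eq hk.ne').mp this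
  rcases hr1.lt_or_gt with hlt | hgt
  · refine eq_of_strictConvexOn_of_sum_eq (Real.strictConcaveOn_rpow hr hlt).neg (div_pos hk hc)
      (div_pos hck hc) hw hu hv hmean ?_ ?_ hi
    · simpa only [Pi.neg_apply, Finset.sum_neg_distrib, neg_inj] using hu1
    · simpa only [Pi.neg_apply, Finset.sum_neg_distrib, neg_inj] using hv1
  · exact eq_of_strictConvexOn_of_sum_eq (strictConvexOn_rpow hgt) (div_pos hk hc) (div_pos hck hc)
      hw hu hv hmean hu1 hv1 hi

section LpNorm

variable {m : Type*} [Fintype m] [DecidableEq m] {p : ℝ} {A : Matrix m m ℂ}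

/-- The squares of the singular values of `A`, listed as the eigenvalues of `Aᴴ * A` with the same
indexing as in `lpnorm`. -/
noncomputable def sqSingularValues (A : Matrix m m ℂ) : m → ℝ :=
  (posSemidef_conjTranspose_mul_self A).isHermitian.eigenvalues

theorem sqSingularValues_nonneg (A : Matrix m m ℂ) (i : m) : 0 ≤ sqSingularValues A i :=
  (posSemidef_conjTranspose_mul_self A).eigenvalues_nonneg i

theorem sqSingularValues_eq_const_iff {k : ℝ} :
    (∀ i, sqSingularValues A i = k) ↔ Aᴴ * A = k • 1 :=
  (eq_smul_one_iff_eigenvalues_eq (posSemidef_conjTranspose_mul_self A).isHermitian).symm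

theorem sum_sqSingularValues (A : Matrix m m ℂ) :
    ∑ i, sqSingularValues A i = (Aᴴ * A).trace.re := by
  rw [(posSemidef_conjTranspose_mul_self A).isHermitian.trace_eq_sum_eigenvalues]
  simp [sqSingularValues]

theorem sum_sqSingularValues_rpow_nonneg (A : Matrix m m ℂ) (r : ℝ) :
    0 ≤ ∑ i, sqSingularValues A i ^ r :=
  Finset.sum_nonneg fun i _ => Real.rpow_nonneg (sqSingularValues_nonneg A i) r

theorem lpnorm_nonneg (p : ℝ) (A : Matrix m m ℂ) : 0 ≤ lpnorm p A :=
  Real.rpow_nonneg (div_nonneg (sum_sqSingularValues_rpow_nonneg A _) (Nat.cast_nonneg _)) _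

theorem lpnorm_rpow (hp : p ≠ 0) (A : Matrix m m ℂ) :
    lpnorm p A ^ p = (∑ i, sqSingularValues A i ^ (p / 2)) / Fintype.card m := by
  change (((∑ i, sqSingularValues A i ^ (p / 2)) / Fintype.card m : ℝ) ^ (1 / p)) ^ p = _
  rw [one_div, Real.rpow_inv_rpow
    (div_nonneg (sum_sqSingularValues_rpow_nonneg A _) (Nat.cast_nonneg _)) hp]

theorem lpnorm_eq_iff [Nonempty m] (hp : p ≠ 0) {s : ℝ} (hs : 0 ≤ s) :
    lpnorm p A = s ↔ ∑ i, sqSingularValues A i ^ (p / 2) = ∑ _i : m, (s ^ 2) ^ (p / 2) := by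
  have hcard : (Fintype.card m : ℝ) ≠ 0 := Nat.cast_ne_zero.mpr Fintype.card_ne_zero
  have hpow : (s ^ 2) ^ (p / 2) = s ^ p := by
    rw [← Real.rpow_natCast_mul hs, Nat.cast_ofNat, mul_div_cancel₀ p two_ne_zero]
  rw [← Real.rpow_left_inj (lpnorm_nonneg p A) hs hp, lpnorm_rpow hp, div_eq_iff hcard, hpow,
    Finset.sum_const, nsmul_eq_mul, mul_comm, Finset.card_univ]

theorem lpnorm_eq_of_gram_eq_smul_one [Nonempty m] (hp : p ≠ 0) {s : ℝ} (hs : 0 ≤ s)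
    (h : Aᴴ * A = s ^ 2 • 1) : lpnorm p A = s := by
  simp only [lpnorm_eq_iff hp hs, sqSingularValues_eq_const_iff.mpr h]

theorem lpnorm_smul_one [Nonempty m] (hp : p ≠ 0) (a : ℂ) :
    lpnorm p (a • 1 : Matrix m m ℂ) = ‖a‖ := by
  refine lpnorm_eq_of_gram_eq_smul_one hp (norm_nonneg a) ?_
  rw [conjTranspose_smul, conjTranspose_one, smul_mul_smul_comm, one_mul, ← Complex.coe_smul,
    Complex.ofReal_pow, ← Complex.conj_mul', Complex.star_def]

theorem sqSingularValues_rpow_le (hp : p ≠ 0) (A : Matrix m m ℂ) (i : m) :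
    sqSingularValues A i ^ (p / 2) ≤ Fintype.card m * lpnorm p A ^ p := by
  have : Nonempty m := ⟨i⟩
  rw [lpnorm_rpow hp, mul_div_cancel₀ _ (Nat.cast_ne_zero.mpr Fintype.card_ne_zero)]
  exact Finset.single_le_sum
    (fun j _ => Real.rpow_nonneg (sqSingularValues_nonneg A j) _) (Finset.mem_univ i)

theorem lpnorm_le_sqrt_trace (hp : 0 < p) (A : Matrix m m ℂ) :
    lpnorm p A ≤ √(Aᴴ * A).trace.re := by
  have htr : 0 ≤ (Aᴴ * A).trace.re :=
    sum_sqSingularValues A ▸ Finset.sum_nonneg fun i _ => sqSingularValues_nonneg A i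
  have hle : ∀ i ∈ Finset.univ, sqSingularValues A i ^ (p / 2) ≤ (Aᴴ * A).trace.re ^ (p / 2) :=
    fun i hi => by
      rw [← sum_sqSingularValues]
      exact Real.rpow_le_rpow (sqSingularValues_nonneg A i)
        (Finset.single_le_sum (fun j _ => sqSingularValues_nonneg A j) hi) (half_pos hp).le
  rw [← Real.rpow_le_rpow_iff (lpnorm_nonneg p A) (Real.sqrt_nonneg _) hp, lpnorm_rpow hp.ne',
    Real.sqrt_eq_rpow, ← Real.rpow_mul htr, one_div_mul_eq_div]
  refine div_le_of_le_mul₀ (Nat.cast_nonneg _) (Real.rpow_nonneg htr _) ?_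
  rw [mul_comm, ← nsmul_eq_mul]
  exact Finset.sum_le_card_nsmul _ _ _ hle

theorem tendsto_lpnorm_zero (hp : 0 < p) :
    Filter.Tendsto (lpnorm p) (nhds (0 : Matrix m m ℂ)) (nhds 0) := by
  have hcont : Continuous fun A : Matrix m m ℂ => √(Aᴴ * A).trace.re := by fun_prop
  refine squeeze_zero (lpnorm_nonneg p) (lpnorm_le_sqrt_trace hp) ?_
  simpa using hcont.tendsto 0

end LpNorm

section RealPart

variable {m : Type*} [Fintype m] [DecidableEq m] {p : ℝ} {U : Matrix m m ℂ} {z : ℂ}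

theorem gram_sub_one (hU : U ∈ unitaryGroup m ℂ) :
    (U - 1)ᴴ * (U - 1) = (2 : ℝ) • 1 - (U + Uᴴ) := by
  have h : Uᴴ * U = 1 := mem_unitaryGroup_iff'.mp hU
  simp only [conjTranspose_sub, conjTranspose_one, sub_mul, mul_sub, h, two_smul]
  noncomm_ring

theorem gram_add_one (hU : U ∈ unitaryGroup m ℂ) :
    (U + 1)ᴴ * (U + 1) = (2 : ℝ) • 1 + (U + Uᴴ) := by
  have h : Uᴴ * U = 1 := mem_unitaryGroup_iff'.mp hU
  simp only [conjTranspose_add, conjTranspose_one, add_mul, mul_add, h, two_smul]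
  noncomm_ring

theorem gram_sub_one_add_gram_add_one (hU : U ∈ unitaryGroup m ℂ) :
    (U - 1)ᴴ * (U - 1) + (U + 1)ᴴ * (U + 1) = (4 : ℝ) • 1 := by
  rw [gram_sub_one hU, gram_add_one hU]
  module

theorem sqSingularValues_sub_one_le (hU : U ∈ unitaryGroup m ℂ) (i : m) :
    sqSingularValues (U - 1) i ≤ 4 := by
  refine eigenvalues_le_of_posSemidef_sub _ ?_ i
  rw [← gram_sub_one_add_gram_add_one hU, add_sub_cancel_left]
  exact posSemidef_conjTranspose_mul_self (U + 1)

theorem sum_sqSingularValues_add_one_rpow (hU : U ∈ unitaryGroup m ℂ) (r : ℝ) :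
    ∑ i, sqSingularValues (U + 1) i ^ r = ∑ i, (4 - sqSingularValues (U - 1) i) ^ r :=
  sum_eigenvalues_const_sub _ _ (gram_sub_one_add_gram_add_one hU) (· ^ r)

theorem eq_neg_one_of_lpnorm_sub_one_eq_two [Nonempty m] (hp : 0 < p)
    (hU : U ∈ unitaryGroup m ℂ) (h : lpnorm p (U - 1) = 2) : U = -1 := by
  rw [lpnorm_eq_iff hp.ne' zero_le_two, show (2 : ℝ) ^ 2 = 4 by norm_num] at h
  have hle : ∀ i ∈ Finset.univ, sqSingularValues (U - 1) i ^ (p / 2) ≤ 4 ^ (p / 2) := fun i _ =>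
    Real.rpow_le_rpow (sqSingularValues_nonneg _ i) (sqSingularValues_sub_one_le hU i)
      (half_pos hp).le
  have hconst : ∀ i, sqSingularValues (U - 1) i = 4 := fun i =>
    (Real.rpow_left_inj (sqSingularValues_nonneg _ i) zero_le_four (half_pos hp).ne').mp
      ((Finset.sum_eq_sum_iff_of_le hle).mp h i (Finset.mem_univ i))
  have hgram : (U + 1)ᴴ * (U + 1) = 0 := by
    have hsum := gram_sub_one_add_gram_add_one hU
    rwa [sqSingularValues_eq_const_iff.mp hconst, add_eq_left] at hsum
  exact eq_neg_of_add_eq_zero_left (conjTranspose_mul_self_eq_zero.mp hgram)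

/-- The unitary matrices whose real part `(U + Uᴴ) / 2` is the scalar matrix `x • 1`, that is,
those with spectrum in `{z, conj z}` for the unimodular `z` of real part `x`. -/
def unitaryWithRealPart (m : Type*) [Fintype m] [DecidableEq m] (x : ℝ) : Set (Matrix m m ℂ) :=
  {U | U ∈ unitaryGroup m ℂ ∧ U + Uᴴ = (2 * x) • 1}

theorem smul_one_mem_unitaryGroup (hz : ‖z‖ = 1) :
    (z • 1 : Matrix m m ℂ) ∈ unitaryGroup m ℂ := by
  rw [mem_unitaryGroup_iff', star_smul, star_one, smul_mul_smul_comm, one_mul, Complex.star_def,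
    Complex.conj_mul', hz, Complex.ofReal_one, one_pow, one_smul]

theorem smul_one_mem_unitaryWithRealPart (hz : ‖z‖ = 1) :
    z • 1 ∈ unitaryWithRealPart m z.re := by
  refine ⟨smul_one_mem_unitaryGroup hz, ?_⟩
  rw [conjTranspose_smul, conjTranspose_one, ← add_smul, ← Complex.coe_smul, Complex.star_def,
    Complex.add_conj]

theorem eq_or_eq_conj_of_smul_one_mem [Nonempty m] (hz : ‖z‖ = 1) {a : ℂ}
    (ha : a • 1 ∈ unitaryWithRealPart m z.re) : a = z ∨ a = star z := by
  obtain ⟨i⟩ := ‹Nonempty m›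
  have hadd : a + star a = z + star z := by
    have h := congrFun₂ ha.2 i i
    simpa [Complex.add_conj] using h
  have hmul : star a * a = star z * z := by
    have h := congrFun₂ (mem_unitaryGroup_iff'.mp ha.1) i i
    rw [Complex.star_def, Complex.conj_mul' z, hz]
    simpa [mul_comm] using h
  have hroots : (a - z) * (a - star z) = 0 := by linear_combination a * hadd - hmul
  exact (mul_eq_zero.mp hroots).imp sub_eq_zero.mp sub_eq_zero.mp

theorem conj_mem_unitaryWithRealPart {x : ℝ} (hU : U ∈ unitaryWithRealPart m x)
    (W : unitaryGroup m ℂ) : (W * U * star (W : Matrix m m ℂ)) ∈ unitaryWithRealPart m x := by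
  refine ⟨mul_mem (mul_mem W.2 hU.1) (Unitary.star_mem W.2), ?_⟩
  rw [← star_eq_conjTranspose, star_mul, star_mul, star_star, ← mul_assoc, ← add_mul, ← mul_add,
    star_eq_conjTranspose U, hU.2, mul_smul_comm, mul_one, smul_mul_assoc,
    mem_unitaryGroup_iff.mp W.2]

theorem norm_sub_one_sq (hz : ‖z‖ = 1) : ‖z - 1‖ ^ 2 = 2 - 2 * z.re := by
  rw [norm_sub_sq_real, hz, norm_one, Complex.inner]
  simp only [one_pow, one_mul, Complex.conj_re]
  ring

theorem norm_add_one_sq (hz : ‖z‖ = 1) : ‖z + 1‖ ^ 2 = 2 + 2 * z.re := by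
  rw [norm_add_sq_real, hz, norm_one, Complex.inner]
  simp only [one_pow, one_mul, Complex.conj_re]
  ring

theorem gram_sub_one_eq_smul_one_iff (hz : ‖z‖ = 1) (hU : U ∈ unitaryGroup m ℂ) :
    (U - 1)ᴴ * (U - 1) = ‖z - 1‖ ^ 2 • 1 ↔ U ∈ unitaryWithRealPart m z.re := by
  rw [gram_sub_one hU, norm_sub_one_sq hz, sub_smul, sub_right_inj]
  exact (and_iff_right hU).symm

theorem gram_add_one_eq_smul_one_iff (hz : ‖z‖ = 1) (hU : U ∈ unitaryGroup m ℂ) :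
    (U + 1)ᴴ * (U + 1) = ‖z + 1‖ ^ 2 • 1 ↔ U ∈ unitaryWithRealPart m z.re := by
  rw [gram_add_one hU, norm_add_one_sq hz, add_smul, add_right_inj]
  exact (and_iff_right hU).symm

theorem mem_unitaryWithRealPart_iff_lpnorm [Nonempty m] (hp : 0 < p) (hp2 : p ≠ 2) (hz : ‖z‖ = 1)
    (him : z.im ≠ 0) (hU : U ∈ unitaryGroup m ℂ) :
    U ∈ unitaryWithRealPart m z.re ↔
      lpnorm p (U - 1) = ‖z - 1‖ ∧ lpnorm p (U + 1) = ‖z + 1‖ := by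
  have hre := Complex.abs_re_lt_norm.mpr him
  rw [hz, abs_lt] at hre
  constructor
  · exact fun h => ⟨lpnorm_eq_of_gram_eq_smul_one hp.ne' (norm_nonneg _)
      ((gram_sub_one_eq_smul_one_iff hz hU).mpr h),
      lpnorm_eq_of_gram_eq_smul_one hp.ne' (norm_nonneg _)
      ((gram_add_one_eq_smul_one_iff hz hU).mpr h)⟩
  · rintro ⟨hsub, hadd⟩
    have hcompl : ‖z + 1‖ ^ 2 = 4 - ‖z - 1‖ ^ 2 := by
      rw [norm_sub_one_sq hz, norm_add_one_sq hz]
      ring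
    rw [lpnorm_eq_iff hp.ne' (norm_nonneg _)] at hsub hadd
    rw [sum_sqSingularValues_add_one_rpow hU, hcompl] at hadd
    have hpos : 0 < ‖z - 1‖ ^ 2 := by linarith [norm_sub_one_sq hz]
    have hlt : ‖z - 1‖ ^ 2 < 4 := by linarith [norm_sub_one_sq hz]
    have hr : p / 2 ≠ 1 := fun h => hp2 ((div_eq_one_iff_eq two_ne_zero).mp h)
    rw [← gram_sub_one_eq_smul_one_iff hz hU, ← sqSingularValues_eq_const_iff]
    exact fun i => eq_of_sum_rpow_eq_of_sum_sub_rpow_eq (half_pos hp) hr hpos hlt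
      (fun j _ => sqSingularValues_nonneg _ j) (fun j _ => sqSingularValues_sub_one_le hU j)
      hsub hadd (Finset.mem_univ i)

end RealPart

theorem exists_eq_smul_one_of_commute_reflections {m R : Type*} [Fintype m] [DecidableEq m]
    [Nonempty m] [CommRing R] [StarRing R] [NoZeroDivisors R] [NeZero (2 : R)] {V : Matrix m m R}
    (h : ∀ S : Matrix m m R, IsSelfAdjoint S → S * S = 1 → Commute S V) : ∃ a : R, V = a • 1 := by
  have hdiag : ∀ i j, i ≠ j → V i j = 0 := fun i j hij => by
    let d : m → R := fun l => if l = i then -1 else 1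
    have hS := h (diagonal d)
      (by rw [isSelfAdjoint_iff, star_eq_conjTranspose, diagonal_conjTranspose]
          congr 1; ext l; by_cases hl : l = i <;> simp [d, hl])
      (by rw [diagonal_mul_diagonal, ← diagonal_one]
          congr 1; ext l; by_cases hl : l = i <;> simp [d, hl])
    have hentry : -V i j = V i j := by simpa [d, hij.symm] using congrFun₂ hS.eq i j
    have htwo : 2 * V i j = 0 := by linear_combination -hentry
    exact (mul_eq_zero.mp htwo).resolve_left two_ne_zero
  have hconst : ∀ i j, V i i = V j j := fun i j => by
    have hS := h (swap R i j) (conjTranspose_swap i j) (swap_mul_self i j)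
    simpa using (congrFun₂ hS.eq i j).symm
  obtain ⟨i₀⟩ := ‹Nonempty m›
  refine ⟨V i₀ i₀, ?_⟩
  ext i j
  by_cases hij : i = j
  · subst hij
    simpa using hconst i i₀
  · simp [hij, hdiag i j hij]

section ReflectionRotation

variable {A : Type*} [Ring A] [Algebra ℂ A] {r v : A} {t : ℝ}

/-- For a reflection `r` (a self-adjoint square root of `1`), the unitary `exp (i t r)`, given here
by its closed form `cos t + i sin t r`. -/
noncomputable def reflectionRotation (r : A) (t : ℝ) : A :=
  (Real.cos t : ℂ) • 1 + (Real.sin t * Complex.I : ℂ) • r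

theorem reflectionRotation_zero (r : A) : reflectionRotation r 0 = 1 := by
  simp [reflectionRotation]

theorem continuous_reflectionRotation [TopologicalSpace A] [ContinuousAdd A] [ContinuousSMul ℂ A]
    (r : A) : Continuous (reflectionRotation r) := by
  unfold reflectionRotation
  fun_prop

theorem star_reflectionRotation [StarRing A] [StarModule ℂ A] (hr : IsSelfAdjoint r) (t : ℝ) :
    star (reflectionRotation r t) = reflectionRotation r (-t) := by
  simp only [reflectionRotation, star_add, star_smul, star_one, hr.star_eq, star_mul',
    Complex.star_def, Complex.conj_ofReal, Complex.conj_I, Real.cos_neg, Real.sin_neg,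
    Complex.ofReal_neg, neg_mul, mul_neg]

theorem reflectionRotation_mul (hr : r * r = 1) (s t : ℝ) :
    reflectionRotation r s * reflectionRotation r t = reflectionRotation r (s + t) := by
  simp only [reflectionRotation, add_mul, mul_add, smul_mul_smul_comm, hr, one_mul, mul_one,
    Real.cos_add, Real.sin_add, Complex.ofReal_add, Complex.ofReal_sub, Complex.ofReal_mul]
  linear_combination (norm := module) ((Real.sin s * Real.sin t : ℂ) * Complex.I_mul_I) • (1 : A)

theorem reflectionRotation_mem_unitary [StarRing A] [StarModule ℂ A] (hr : IsSelfAdjoint r)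
    (hrr : r * r = 1) (t : ℝ) : reflectionRotation r t ∈ unitary A := by
  rw [Unitary.mem_iff, star_reflectionRotation hr, reflectionRotation_mul hrr,
    reflectionRotation_mul hrr, neg_add_cancel, add_neg_cancel, reflectionRotation_zero]
  exact ⟨rfl, rfl⟩

theorem commute_of_commute_reflectionRotation (ht : Real.sin t ≠ 0)
    (h : Commute (reflectionRotation r t) v) : Commute r v := by
  have hs : (Real.sin t * Complex.I : ℂ) ≠ 0 :=
    mul_ne_zero (Complex.ofReal_ne_zero.mpr ht) Complex.I_ne_zero
  have hcomm := h.eq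
  simp only [reflectionRotation, add_mul, mul_add, smul_mul_assoc, mul_smul_comm, one_mul, mul_one,
    add_right_inj] at hcomm
  exact smul_right_injective _ hs hcomm

theorem accPt_unitaryOrbit_of_not_commute_reflection [StarRing A] [StarModule ℂ A]
    [TopologicalSpace A] [IsTopologicalRing A] [ContinuousSMul ℂ A] [ContinuousStar A]
    (hr : IsSelfAdjoint r) (hrr : r * r = 1) (hrv : ¬ Commute r v) :
    AccPt v (Filter.principal (Set.range fun w : unitary A => (w : A) * v * star (w : A))) := by
  let γ : ℝ → A := fun t => reflectionRotation r t * v * star (reflectionRotation r t)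
  have hγ : Filter.Tendsto γ (nhdsWithin 0 (Set.Ioi 0)) (nhds v) := by
    have hcont : Continuous γ := by
      have := continuous_reflectionRotation r
      fun_prop
    have h0 : γ 0 = v := by simp [γ, reflectionRotation_zero]
    exact (h0 ▸ hcont.tendsto 0).mono_left nhdsWithin_le_nhds
  have hne : ∀ t ∈ Set.Ioo 0 Real.pi, γ t ≠ v := fun t ht hγt => by
    refine hrv (commute_of_commute_reflectionRotation (Real.sin_pos_of_mem_Ioo ht).ne' ?_)
    rw [commute_iff_eq]
    have hmul := congrArg (· * reflectionRotation r t) hγt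
    have hstar := Unitary.star_mul_self_of_mem (reflectionRotation_mem_unitary hr hrr t)
    simpa only [γ, mul_assoc, hstar, mul_one] using hmul
  rw [accPt_iff_frequently]
  refine hγ.frequently (Filter.Eventually.frequently ?_)
  filter_upwards [Ioo_mem_nhdsGT Real.pi_pos] with t ht
  exact ⟨hne t ht, ⟨reflectionRotation r t, reflectionRotation_mem_unitary hr hrr t⟩, rfl⟩

end ReflectionRotation

section Isolation

variable {m : Type*} [Fintype m] [DecidableEq m] {p : ℝ} {U V : Matrix m m ℂ} {z : ℂ}

theorem accPt_unitaryWithRealPart [Nonempty m] {x : ℝ} (hV : V ∈ unitaryWithRealPart m x)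
    (hne : ∀ a : ℂ, V ≠ a • 1) : AccPt V (Filter.principal (unitaryWithRealPart m x)) := by
  obtain ⟨S, hS, hSS, hSV⟩ : ∃ S : Matrix m m ℂ, IsSelfAdjoint S ∧ S * S = 1 ∧ ¬ Commute S V := by
    by_contra! hall
    obtain ⟨a, ha⟩ := exists_eq_smul_one_of_commute_reflections hall
    exact hne a ha
  refine (accPt_unitaryOrbit_of_not_commute_reflection hS hSS hSV).mono
    (Filter.principal_mono.mpr ?_)
  rintro _ ⟨W, rfl⟩
  exact conj_mem_unitaryWithRealPart hV W

theorem gram_sub_smul_one_mul_self (hz : ‖z‖ = 1) (hU : U ∈ unitaryWithRealPart m z.re) :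
    ((U - z • 1)ᴴ * (U - z • 1)) * ((U - z • 1)ᴴ * (U - z • 1)) =
      (4 * z.im ^ 2 : ℝ) • ((U - z • 1)ᴴ * (U - z • 1)) := by
  have hUH : Uᴴ = (z + star z) • 1 - U := by
    rw [Complex.star_def, Complex.add_conj, Complex.coe_smul, ← hU.2, add_sub_cancel_left]
  have hUU : U * U = (z + star z) • U - (1 : Matrix m m ℂ) := by
    have hUHU : Uᴴ * U = 1 := mem_unitaryGroup_iff'.mp hU.1
    rw [hUH, sub_mul, smul_mul_assoc, one_mul] at hUHU
    rw [← hUHU, sub_sub_cancel]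
  have hzz : z * star z = 1 := by
    rw [Complex.star_def, Complex.mul_conj', hz, Complex.ofReal_one, one_pow]
  set A : Matrix m m ℂ := U - z • 1 with hA
  have hAH : Aᴴ = -A := by
    rw [hA, conjTranspose_sub, conjTranspose_smul, conjTranspose_one, hUH]
    module
  have hAA : A * A = (star z - z) • A := by
    simp only [hA, sub_mul, mul_sub, smul_mul_assoc, mul_smul_comm, one_mul, mul_one, hUU]
    linear_combination (norm := module) hzz • (1 : Matrix m m ℂ)
  have him : ((4 * z.im ^ 2 : ℝ) : ℂ) = -(star z - z) ^ 2 := by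
    rw [← neg_sub, Complex.star_def, Complex.sub_conj]
    push_cast
    linear_combination 4 * (z.im : ℂ) ^ 2 * Complex.I_sq
  rw [← Complex.coe_smul, him, hAH, neg_mul, hAA]
  simp only [neg_mul_neg, smul_mul_smul_comm, hAA]
  module

theorem exists_sqSingularValues_sub_smul_one_eq (hz : ‖z‖ = 1)
    (hU : U ∈ unitaryWithRealPart m z.re) (hne : U ≠ z • 1) :
    ∃ i, sqSingularValues (U - z • 1) i = 4 * z.im ^ 2 := by
  obtain ⟨i, hi⟩ : ∃ i, sqSingularValues (U - z • 1) i ≠ 0 := by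
    by_contra! h0
    have hgram := sqSingularValues_eq_const_iff.mp h0
    rw [zero_smul, conjTranspose_mul_self_eq_zero, sub_eq_zero] at hgram
    exact hne hgram
  have hquad := (mul_self_eq_smul_iff_eigenvalues (isHermitian_conjTranspose_mul_self _)).mp
    (gram_sub_smul_one_mul_self hz hU) i
  exact ⟨i, hquad.resolve_left hi⟩

theorem exists_pos_le_lpnorm_sub_smul_one (hp : 0 < p) (hz : ‖z‖ = 1) (him : z.im ≠ 0) :
    ∃ δ > 0, ∀ U ∈ unitaryWithRealPart m z.re, U ≠ z • 1 → δ ≤ lpnorm p (U - z • 1) := by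
  rcases isEmpty_or_nonempty m with _ | _
  · exact ⟨1, one_pos, fun U _ hne => absurd (Subsingleton.elim _ _) hne⟩
  have hcard : (0 : ℝ) < Fintype.card m := Nat.cast_pos.mpr Fintype.card_pos
  have hpow : 0 < (4 * z.im ^ 2) ^ (p / 2) / Fintype.card m := by positivity
  refine ⟨((4 * z.im ^ 2) ^ (p / 2) / Fintype.card m) ^ p⁻¹, Real.rpow_pos_of_pos hpow _,
    fun U hU hne => ?_⟩
  obtain ⟨i, hi⟩ := exists_sqSingularValues_sub_smul_one_eq hz hU hne
  rw [Real.rpow_inv_le_iff_of_pos hpow.le (lpnorm_nonneg p _) hp, div_le_iff₀' hcard, ← hi]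
  exact sqSingularValues_rpow_le hp.ne' _ i

end Isolation

/-- `ψ` restricts to a surjective `L^p`-isometry of the unitary group onto itself fixing `1`; its
values at non-unitary matrices are irrelevant. -/
structure IsUnitalLpIsometry {m : Type*} [Fintype m] [DecidableEq m] (p : ℝ)
    (ψ : Matrix m m ℂ → Matrix m m ℂ) : Prop where
  map_mem : ∀ U ∈ unitaryGroup m ℂ, ψ U ∈ unitaryGroup m ℂ
  exists_map_eq : ∀ V ∈ unitaryGroup m ℂ, ∃ U ∈ unitaryGroup m ℂ, ψ U = V
  lpnorm_map_sub : ∀ U ∈ unitaryGroup m ℂ, ∀ V ∈ unitaryGroup m ℂ,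
    lpnorm p (ψ U - ψ V) = lpnorm p (U - V)
  map_one : ψ 1 = 1

namespace IsUnitalLpIsometry

variable {m : Type*} [Fintype m] [DecidableEq m] [Nonempty m] {p : ℝ}
  {ψ : Matrix m m ℂ → Matrix m m ℂ} {U : Matrix m m ℂ} {z w a b : ℂ}

theorem map_neg_one (h : IsUnitalLpIsometry p ψ) (hp : 0 < p) : ψ (-1) = -1 := by
  have hneg : (-1 : Matrix m m ℂ) ∈ unitaryGroup m ℂ := (-1 : unitaryGroup m ℂ).2
  refine eq_neg_one_of_lpnorm_sub_one_eq_two hp (h.map_mem _ hneg) ?_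
  have hdist := h.lpnorm_map_sub _ hneg _ (one_mem _)
  rw [h.map_one] at hdist
  have hscalar : (-1 - 1 : Matrix m m ℂ) = (-2 : ℂ) • 1 := by module
  rw [hdist, hscalar, lpnorm_smul_one hp.ne', norm_neg, Complex.norm_ofNat]

theorem map_mem_unitaryWithRealPart_iff (h : IsUnitalLpIsometry p ψ) (hp : 0 < p) (hp2 : p ≠ 2)
    (hz : ‖z‖ = 1) (him : z.im ≠ 0) (hU : U ∈ unitaryGroup m ℂ) :
    ψ U ∈ unitaryWithRealPart m z.re ↔ U ∈ unitaryWithRealPart m z.re := by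
  have hsub := h.lpnorm_map_sub U hU 1 (one_mem _)
  have hadd := h.lpnorm_map_sub U hU (-1) (-1 : unitaryGroup m ℂ).2
  rw [h.map_one] at hsub
  rw [h.map_neg_one hp, sub_neg_eq_add, sub_neg_eq_add] at hadd
  rw [mem_unitaryWithRealPart_iff_lpnorm hp hp2 hz him (h.map_mem U hU),
    mem_unitaryWithRealPart_iff_lpnorm hp hp2 hz him hU, hsub, hadd]

theorem exists_map_smul_one_eq (h : IsUnitalLpIsometry p ψ) (hp : 0 < p) (hp2 : p ≠ 2)
    (hz : ‖z‖ = 1) (him : z.im ≠ 0) : ∃ a : ℂ, ψ (z • 1) = a • 1 := by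
  by_contra! hnonscalar
  have hzU : z • 1 ∈ unitaryGroup m ℂ := smul_one_mem_unitaryGroup hz
  have hmem := (h.map_mem_unitaryWithRealPart_iff hp hp2 hz him hzU).mpr
    (smul_one_mem_unitaryWithRealPart hz)
  obtain ⟨δ, hδ, hgap⟩ := exists_pos_le_lpnorm_sub_smul_one (m := m) hp hz him
  have hnear : ∀ᶠ V in nhds (ψ (z • 1)), lpnorm p (V - ψ (z • 1)) < δ := by
    have hsub : Filter.Tendsto (· - ψ (z • 1)) (nhds (ψ (z • 1))) (nhds 0) :=
      tendsto_sub_nhds_zero_iff.mpr Filter.tendsto_id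
    exact ((tendsto_lpnorm_zero hp).comp hsub).eventually_lt_const hδ
  obtain ⟨V, ⟨hVne, hVmem⟩, hVδ⟩ := ((accPt_iff_frequently.mp
    (accPt_unitaryWithRealPart hmem hnonscalar)).and_eventually hnear).exists
  obtain ⟨U, hU, rfl⟩ := h.exists_map_eq V hVmem.1
  rw [h.lpnorm_map_sub U hU _ hzU] at hVδ
  refine (hgap U ((h.map_mem_unitaryWithRealPart_iff hp hp2 hz him hU).mp hVmem) ?_).not_gt hVδ
  rintro rfl
  exact hVne rfl

theorem map_smul_one_eq_or_eq_star (h : IsUnitalLpIsometry p ψ) (hp : 0 < p) (hp2 : p ≠ 2)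
    (hz : ‖z‖ = 1) : ψ (z • 1) = z • 1 ∨ ψ (z • 1) = star z • 1 := by
  by_cases him : z.im = 0
  · left
    have hre : z = z.re := Complex.ext rfl (by simpa using him)
    rw [hre, Complex.norm_real, Real.norm_eq_abs] at hz
    rcases eq_or_eq_neg_of_abs_eq hz with h1 | h1 <;> rw [hre, h1]
    · simpa using h.map_one
    · simpa using h.map_neg_one hp
  · obtain ⟨a, ha⟩ := h.exists_map_smul_one_eq hp hp2 hz him
    have hmem := (h.map_mem_unitaryWithRealPart_iff hp hp2 hz him
      (smul_one_mem_unitaryGroup hz)).mpr (smul_one_mem_unitaryWithRealPart hz)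
    rw [ha] at hmem ⊢
    exact (eq_or_eq_conj_of_smul_one_mem hz hmem).imp (congrArg (· • 1)) (congrArg (· • 1))

theorem norm_sub_of_map_smul_one (h : IsUnitalLpIsometry p ψ) (hp : p ≠ 0) (hz : ‖z‖ = 1)
    (hw : ‖w‖ = 1) (ha : ψ (z • 1) = a • 1) (hb : ψ (w • 1) = b • 1) : ‖a - b‖ = ‖z - w‖ := by
  have hdist := h.lpnorm_map_sub _ (smul_one_mem_unitaryGroup hz) _ (smul_one_mem_unitaryGroup hw)
  rwa [ha, hb, ← sub_smul, ← sub_smul, lpnorm_smul_one hp, lpnorm_smul_one hp] at hdist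

end IsUnitalLpIsometry

theorem star_eq_self_of_norm_star_sub_I_eq {z : ℂ}
    (h : ‖star z - Complex.I‖ = ‖z - Complex.I‖) : star z = z := by
  rw [Complex.star_def, Complex.conj_eq_iff_im]
  have hsq : ‖star z - Complex.I‖ ^ 2 = ‖z - Complex.I‖ ^ 2 := by rw [h]
  simp only [Complex.sq_norm, Complex.normSq_apply, Complex.star_def, Complex.sub_re,
    Complex.sub_im, Complex.conj_re, Complex.conj_im, Complex.I_re, Complex.I_im] at hsq
  linarith

theorem stmt10_general {m : Type*} [Fintype m] [DecidableEq m] {p : ℝ} (hp : 0 < p) (hp2 : p ≠ 2)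
    {ψ : Matrix m m ℂ → Matrix m m ℂ} (h : IsUnitalLpIsometry p ψ) :
    (∀ z : ℂ, ‖z‖ = 1 → ψ (z • 1) = z • 1) ∨ (∀ z : ℂ, ‖z‖ = 1 → ψ (z • 1) = star z • 1) := by
  rcases isEmpty_or_nonempty m with _ | _
  · exact .inl fun _ _ => Subsingleton.elim _ _
  refine (h.map_smul_one_eq_or_eq_star hp hp2 Complex.norm_I).imp (fun hI z hz => ?_)
    (fun hI z hz => ?_)
  · refine (h.map_smul_one_eq_or_eq_star hp hp2 hz).elim id fun hzstar => ?_
    have hnorm := h.norm_sub_of_map_smul_one hp.ne' hz Complex.norm_I hzstar hI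
    rwa [star_eq_self_of_norm_star_sub_I_eq hnorm] at hzstar
  · refine (h.map_smul_one_eq_or_eq_star hp hp2 hz).elim (fun hzid => ?_) id
    have hnorm := h.norm_sub_of_map_smul_one hp.ne' hz Complex.norm_I hzid hI
    rw [← norm_star (z - star Complex.I), star_sub, star_star] at hnorm
    rwa [star_eq_self_of_norm_star_sub_I_eq hnorm]

/-- A surjective `L^p`-isometry (`p ≠ 2`) of the unitary group fixing `I` acts on the
scalar unitaries `e^{iθ}I` either identically or by conjugation. -/
theorem stmt10 (n : ℕ) (hn : 1 ≤ n) (p : ℝ) (hp : 0 < p) (hp2 : p ≠ 2)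
    (ψ : Matrix (Fin n) (Fin n) ℂ → Matrix (Fin n) (Fin n) ℂ)
    (hmem : ∀ U ∈ Matrix.unitaryGroup (Fin n) ℂ, ψ U ∈ Matrix.unitaryGroup (Fin n) ℂ)
    (hsurj : ∀ V ∈ Matrix.unitaryGroup (Fin n) ℂ,
      ∃ U ∈ Matrix.unitaryGroup (Fin n) ℂ, ψ U = V)
    (hiso : ∀ U ∈ Matrix.unitaryGroup (Fin n) ℂ, ∀ V ∈ Matrix.unitaryGroup (Fin n) ℂ,
      lpnorm p (ψ U - ψ V) = lpnorm p (U - V))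
    (hone : ψ 1 = 1) :
    (∀ θ : ℝ, ψ (Complex.exp (θ * Complex.I) • 1) = Complex.exp (θ * Complex.I) • 1) ∨
    (∀ θ : ℝ, ψ (Complex.exp (θ * Complex.I) • 1) = Complex.exp (-θ * Complex.I) • 1) := by
  exact (stmt10_general hp hp2 ⟨hmem, hsurj, hiso, hone⟩).imp
    (fun h θ => h _ (Complex.norm_exp_ofReal_mul_I θ)) fun h θ => by
      rw [h _ (Complex.norm_exp_ofReal_mul_I θ), Complex.star_def, ← Complex.exp_conj, map_mul,
        Complex.conj_ofReal, Complex.conj_I, mul_neg, neg_mul]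
end

section
/- Let n ≥ 1. Every unitary matrix V ∈ M_{2ⁿ}(ℂ) can be written as V = e^{iθ}·U₁·U₂·⋯·U_l for some θ ∈ ℝ, some l ∈ ℕ, and self-adjoint unitary matrices U₁, …, U_l ∈ M_{2ⁿ}(ℂ). -/
open Matrix
open scoped ComplexOrder

/-!
Conjugation by a unitary preserves self-adjoint unitaries, so they generate a normal subgroup of the
unitary group, and by the spectral theorem membership only has to be checked on diagonal unitaries.
The permutation matrix of a transposition `(i j)` is a self-adjoint unitary; its commutator with the
diagonal unitary that has `w` in place `i` and `1` elsewhere is the diagonal unitary with `w` in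
place `i` and `w⁻¹` in place `j`. Such matrices generate the diagonal unitaries of determinant one,
so the subgroup contains the special unitary group. Dividing a unitary by a root of its determinant
makes it special, which accounts for the phase.
-/

section Symmetries

variable {R : Type*} [Monoid R] [StarMul R]

variable (R) in
/-- The group generated by the symmetries (the self-adjoint unitaries) of a star monoid, as a
subgroup of its unitary group; its elements are the products of symmetries. -/
def symmetrySubgroup : Subgroup (unitary R) :=
  Subgroup.closure {u | IsSelfAdjoint u}

lemma mem_symmetrySubgroup_of_isSelfAdjoint {u : unitary R} (hu : IsSelfAdjoint u) :
    u ∈ symmetrySubgroup R :=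
  Subgroup.subset_closure hu

instance symmetrySubgroup.normal : (symmetrySubgroup R).Normal where
  conj_mem u hu v := by
    have hclosure : symmetrySubgroup R ≤ (symmetrySubgroup R).comap (MulAut.conj v).toMonoidHom :=
      (Subgroup.closure_le _).2 fun _ hs => mem_symmetrySubgroup_of_isSelfAdjoint (hs.conjugate v)
    exact hclosure hu

lemma exists_list_prod_eq_of_mem_symmetrySubgroup {u : unitary R} (hu : u ∈ symmetrySubgroup R) :
    ∃ L : List R, (∀ s ∈ L, s ∈ unitary R ∧ IsSelfAdjoint s) ∧ L.prod = u := by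
  have hinv : {s : unitary R | IsSelfAdjoint s}⁻¹ = {s | IsSelfAdjoint s} := by
    ext s
    simp [← Unitary.star_eq_inv]
  rw [symmetrySubgroup, ← Subgroup.mem_toSubmonoid, Subgroup.closure_toSubmonoid, hinv,
    Set.union_self] at hu
  obtain ⟨L, hL, rfl⟩ := Submonoid.exists_list_of_mem_closure hu
  refine ⟨L.map (↑), fun s hs => ?_, (Submonoid.coe_list_prod _ L).symm⟩
  obtain ⟨t, ht, rfl⟩ := List.mem_map.1 hs
  exact ⟨t.2, congrArg Subtype.val (hL t ht)⟩

end Symmetries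

section Diagonal

variable {m α : Type*} [Fintype m] [DecidableEq m] [CommRing α] [StarRing α]

lemma diagonal_mem_unitaryGroup_iff {d : m → α} :
    diagonal d ∈ unitaryGroup m α ↔ ∀ i, d i ∈ unitary α := by
  simp only [mem_unitaryGroup_iff, star_eq_conjTranspose, diagonal_conjTranspose,
    diagonal_mul_diagonal, diagonal_eq_one, funext_iff, Pi.star_apply, Pi.one_apply,
    Unitary.mem_iff_self_mul_star]

/-- The diagonal unitary matrix with given unitary entries (over `ℂ`, points of the unit circle); it
reduces membership in `symmetrySubgroup` to the entries of a diagonal matrix. -/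
def diagonalUnitary : (m → unitary α) →* unitaryGroup m α where
  toFun c := ⟨diagonal fun i => (c i : α), diagonal_mem_unitaryGroup_iff.2 fun i => (c i).2⟩
  map_one' := Subtype.ext diagonal_one
  map_mul' _ _ := Subtype.ext (diagonal_mul_diagonal _ _).symm

lemma coe_diagonalUnitary (c : m → unitary α) :
    (diagonalUnitary c : Matrix m m α) = diagonal fun i => (c i : α) := rfl

lemma permMatrix_mem_unitaryGroup (σ : Equiv.Perm m) : σ.permMatrix α ∈ unitaryGroup m α := by
  rw [mem_unitaryGroup_iff, star_eq_conjTranspose, conjTranspose_permMatrix, ← permMatrix_mul,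
    inv_mul_cancel, permMatrix_one]

/-- Permutation matrices as unitary matrices; those of transpositions are self-adjoint. As in
`Matrix.permMatrixHom`, the permutation is inverted to get a homomorphism. -/
def permUnitary : Equiv.Perm m →* unitaryGroup m α where
  toFun σ := ⟨σ⁻¹.permMatrix α, permMatrix_mem_unitaryGroup σ⁻¹⟩
  map_one' := Subtype.ext permMatrix_one
  map_mul' _ _ := Subtype.ext (map_mul permMatrixHom _ _)

lemma coe_permUnitary (σ : Equiv.Perm m) :
    ((permUnitary σ : unitaryGroup m α) : Matrix m m α) = σ⁻¹.permMatrix α := rfl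

lemma permUnitary_mul_diagonalUnitary_mul_inv (σ : Equiv.Perm m) (c : m → unitary α) :
    permUnitary σ * diagonalUnitary c * (permUnitary σ)⁻¹ = diagonalUnitary (c ∘ ⇑σ⁻¹) := by
  rw [← map_inv]
  refine Subtype.ext ?_
  simp only [Submonoid.coe_mul, coe_permUnitary, coe_diagonalUnitary, inv_inv,
    PEquiv.toMatrix_toPEquiv_mul, PEquiv.mul_toMatrix_toPEquiv, submatrix_submatrix]
  exact submatrix_diagonal_equiv (fun i => (c i : α)) σ⁻¹

lemma isSelfAdjoint_permUnitary_swap (i j : m) :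
    IsSelfAdjoint (permUnitary (Equiv.swap i j) : unitaryGroup m α) := by
  rw [isSelfAdjoint_iff, Unitary.star_eq_inv, ← map_inv, Equiv.swap_inv]

open scoped commutatorElement in
lemma diagonalUnitary_div_comp_swap_mem_symmetrySubgroup (c : m → unitary α) (i j : m) :
    diagonalUnitary (c / (c ∘ Equiv.swap i j)) ∈ symmetrySubgroup (Matrix m m α) := by
  have hcomm : ⁅diagonalUnitary c, permUnitary (Equiv.swap i j)⁆ =
      diagonalUnitary (c / (c ∘ Equiv.swap i j)) := by
    rw [commutatorElement_def, mul_assoc, mul_assoc, ← mul_assoc (permUnitary _), ← map_inv,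
      permUnitary_mul_diagonalUnitary_mul_inv, ← map_mul, Equiv.swap_inv, div_eq_mul_inv]
    rfl
  have hswap := mem_symmetrySubgroup_of_isSelfAdjoint (isSelfAdjoint_permUnitary_swap (α := α) i j)
  rw [← hcomm, commutatorElement_def]
  exact mul_mem (symmetrySubgroup.normal.conj_mem _ hswap _) (inv_mem hswap)

lemma diagonalUnitary_mulSingle_div_mem_symmetrySubgroup (i j : m) (w : unitary α) :
    diagonalUnitary (Pi.mulSingle i w / Pi.mulSingle j w) ∈ symmetrySubgroup (Matrix m m α) := by
  have hswap : (Pi.mulSingle i w : m → unitary α) ∘ Equiv.swap i j = Pi.mulSingle j w := by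
    ext k
    simp only [Pi.mulSingle_apply, Function.comp_apply, Equiv.swap_apply_eq_iff,
      Equiv.swap_apply_left]
  simpa only [hswap] using diagonalUnitary_div_comp_swap_mem_symmetrySubgroup (Pi.mulSingle i w) i j

theorem diagonalUnitary_mem_symmetrySubgroup_of_prod_eq_one {c : m → unitary α}
    (hc : ∏ i, c i = 1) : diagonalUnitary c ∈ symmetrySubgroup (Matrix m m α) := by
  rcases isEmpty_or_nonempty m with _ | ⟨⟨i⟩⟩
  · rw [Subsingleton.elim c 1, map_one]
    exact one_mem _
  have hsingle : ∏ j, (Pi.mulSingle i (c j) : m → unitary α) = 1 := by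
    rw [← Pi.mulSingle_one i, ← hc]
    exact (map_prod (MonoidHom.mulSingle (fun _ => unitary α) i) c _).symm
  have hprod : c = ∏ j, (Pi.mulSingle j (c j) / Pi.mulSingle i (c j)) := by
    rw [Finset.prod_div_distrib, Finset.univ_prod_mulSingle, hsingle, div_one]
  suffices c ∈ (symmetrySubgroup (Matrix m m α)).comap diagonalUnitary from this
  rw [hprod]
  exact prod_mem fun j _ => diagonalUnitary_mulSingle_div_mem_symmetrySubgroup j i (c j)

end Diagonal

section Complex

open Polynomial

lemma exists_isSelfAdjoint_aeval_eq {A : Type*} [Ring A] [StarRing A] [TopologicalSpace A]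
    [Algebra ℂ A] [ContinuousFunctionalCalculus ℂ A IsStarNormal] (a : A) [IsStarNormal a]
    (ha : (spectrum ℂ a).Finite) :
    ∃ (h : A) (p : ℂ[X]), IsSelfAdjoint h ∧ aeval h p = a := by
  -- An injection `ℂ → ℝ` turns `a` into a self-adjoint element; interpolation on the finite
  -- spectrum undoes it.
  obtain ⟨e⟩ : Nonempty (ℂ ≃ ℝ) := Cardinal.eq.1 (Cardinal.mk_complex.trans Cardinal.mk_real.symm)
  let g : ℂ → ℂ := fun z => e z
  have hg : ContinuousOn g (spectrum ℂ a) := ha.continuousOn g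
  let p : ℂ[X] := Lagrange.interpolate ha.toFinset g id
  have hp : ∀ z ∈ spectrum ℂ a, p.eval (g z) = z := fun z hz =>
    Lagrange.eval_interpolate_at_node id (Complex.ofReal_injective.comp e.injective).injOn
      (ha.mem_toFinset.2 hz)
  refine ⟨cfc g a, p, ?_, ?_⟩
  · rw [isSelfAdjoint_iff, ← cfc_star]
    simp [g]
  · rw [← cfc_map_polynomial p g a, cfc_congr hp, cfc_id' ℂ a]

variable {m : Type*} [Fintype m] [DecidableEq m]

open scoped Matrix.Norms.L2Operator in
theorem exists_eq_conjStarAlgAut_diagonal (A : Matrix m m ℂ) [IsStarNormal A] :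
    ∃ (P : unitaryGroup m ℂ) (d : m → ℂ), A = Unitary.conjStarAlgAut ℂ _ P (diagonal d) := by
  obtain ⟨H, p, hsa, rfl⟩ := exists_isSelfAdjoint_aeval_eq A A.finite_spectrum
  have hH : H.IsHermitian := hsa
  refine ⟨hH.eigenvectorUnitary, fun i => p.eval (hH.eigenvalues i : ℂ), ?_⟩
  have hdiag : diagonal (fun i => p.eval (hH.eigenvalues i : ℂ)) =
      aeval (diagonal (RCLike.ofReal ∘ hH.eigenvalues)) p :=
    (congrArg diagonal (aeval_pi_apply _ p).symm).trans
      (aeval_algHom_apply (diagonalAlgHom ℂ) _ p).symm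
  conv_lhs => rw [hH.spectral_theorem]
  rw [hdiag]
  exact aeval_algHom_apply _ _ _

theorem exists_eq_mul_diagonalUnitary_mul_inv (V : unitaryGroup m ℂ) :
    ∃ (P : unitaryGroup m ℂ) (c : m → unitary ℂ), V = P * diagonalUnitary c * P⁻¹ := by
  obtain ⟨P, d, hd⟩ := exists_eq_conjStarAlgAut_diagonal (V : Matrix m m ℂ)
  have hmem : diagonal d ∈ unitaryGroup m ℂ := by
    rw [← (Unitary.conjStarAlgAut ℂ _ P).symm_apply_apply (diagonal d), ← hd]
    exact Unitary.map_mem _ V.2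
  exact ⟨P, fun i => ⟨d i, diagonal_mem_unitaryGroup_iff.1 hmem i⟩, Subtype.ext hd⟩

theorem mem_symmetrySubgroup_of_det_eq_one {V : unitaryGroup m ℂ}
    (hV : (V : Matrix m m ℂ).det = 1) : V ∈ symmetrySubgroup (Matrix m m ℂ) := by
  obtain ⟨P, c, rfl⟩ := exists_eq_mul_diagonalUnitary_mul_inv V
  have hc : ∏ i, (c i : ℂ) = 1 := by
    rw [← hV, ← det_diagonal]
    exact (det_conj_of_mul_eq_one (Unitary.mul_star_self_of_mem P.2)
      (Unitary.star_mul_self_of_mem P.2)).symm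
  exact symmetrySubgroup.normal.conj_mem _
    (diagonalUnitary_mem_symmetrySubgroup_of_prod_eq_one (Subtype.ext (by simpa using hc))) P

lemma circle_coe_mem_unitary (z : Circle) : (z : ℂ) ∈ unitary ℂ := by
  rw [Unitary.mem_iff_self_mul_star, Complex.star_def, ← Circle.coe_inv_eq_conj, ← Circle.coe_mul,
    mul_inv_cancel, Circle.coe_one]

lemma exists_circle_smul_mem_specialUnitaryGroup {V : Matrix m m ℂ} (hV : V ∈ unitaryGroup m ℂ) :
    ∃ z : Circle, ∃ W ∈ specialUnitaryGroup m ℂ, V = (z : ℂ) • W := by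
  rcases isEmpty_or_nonempty m with _ | _
  · exact ⟨1, V, ⟨hV, det_isEmpty⟩, by simp⟩
  have hdet : ‖V.det‖ = 1 := CStarRing.norm_of_mem_unitary (det_of_mem_unitary hV)
  obtain ⟨z, hz⟩ : ∃ z : Circle, (z : ℂ) ^ Fintype.card m = V.det := by
    obtain ⟨w, hw⟩ := IsAlgClosed.exists_pow_nat_eq V.det (Fintype.card_pos (α := m))
    have hnorm : ‖w‖ ^ Fintype.card m = 1 := by rw [← norm_pow, hw, hdet]
    exact ⟨⟨w, mem_sphere_zero_iff_norm.2
      ((pow_eq_one_iff_of_nonneg (norm_nonneg w) Fintype.card_ne_zero).1 hnorm)⟩, hw⟩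
  refine ⟨z, (z⁻¹ : Circle) • V, ⟨?_, ?_⟩, (smul_inv_smul z V).symm⟩
  · exact Unitary.smul_mem_of_mem (r := (z⁻¹ : Circle).1) (circle_coe_mem_unitary z⁻¹) hV
  · change ((z⁻¹ : ℂ) • V).det = 1
    rw [det_smul, inv_pow, hz]
    exact inv_mul_cancel₀ (by simp [← norm_ne_zero_iff, hdet])

end Complex

theorem stmt11_general {m : Type*} [Fintype m] [DecidableEq m] {V : Matrix m m ℂ}
    (hV : V ∈ unitaryGroup m ℂ) :
    ∃ (θ : ℝ) (l : ℕ) (U : Fin l → Matrix m m ℂ),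
      (∀ i, U i ∈ unitaryGroup m ℂ ∧ (U i)ᴴ = U i) ∧
      V = Complex.exp (θ * Complex.I) • (List.ofFn U).prod := by
  obtain ⟨z, W, hW, rfl⟩ := exists_circle_smul_mem_specialUnitaryGroup hV
  obtain ⟨L, hL, hLW⟩ := exists_list_prod_eq_of_mem_symmetrySubgroup
    (mem_symmetrySubgroup_of_det_eq_one (V := ⟨W, hW.1⟩) hW.2)
  refine ⟨Complex.arg z, L.length, L.get, fun i => hL _ (L.get_mem i), ?_⟩
  rw [List.ofFn_get, hLW, ← Circle.coe_exp, Circle.exp_arg]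

/-- Every unitary in `M_{2ⁿ}(ℂ)` is a complex number of modulus one times a product of
self-adjoint unitaries. -/
theorem stmt11 (n : ℕ) (hn : 1 ≤ n)
    (V : Matrix (Fin (2 ^ n)) (Fin (2 ^ n)) ℂ)
    (hV : V ∈ Matrix.unitaryGroup (Fin (2 ^ n)) ℂ) :
    ∃ (θ : ℝ) (l : ℕ) (U : Fin l → Matrix (Fin (2 ^ n)) (Fin (2 ^ n)) ℂ),
      (∀ i, U i ∈ Matrix.unitaryGroup (Fin (2 ^ n)) ℂ ∧ (U i)ᴴ = U i) ∧
      V = Complex.exp (θ * Complex.I) • (List.ofFn U).prod :=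
  stmt11_general hV
end

section
/- Let n ≥ 1 and p ∈ (0,∞). Identify M_{2n}(ℂ) with 2×2 block matrices over Mₙ(ℂ) (via fromBlocks), and let 𝒫_{1/2} denote the set of projections in M_{2n}(ℂ) of normalized trace 1/2. Let φ : 𝒫_{1/2} → 𝒫_{1/2} be a surjective L^p-isometry (with respect to the normalized-trace L^p-norm on M_{2n}(ℂ)) satisfying φ(fromBlocks(I, 0, 0, 0)) = fromBlocks(I, 0, 0, 0). Then there exists a surjective L^p-isometry ψ : 𝒰(Mₙ(ℂ)) → 𝒰(Mₙ(ℂ)) (with respect to the normalized-trace L^p-norm on Mₙ(ℂ)) such that φ((1/2)·fromBlocks(I, V, Vᴴ, I)) = (1/2)·fromBlocks(I, ψ(V), ψ(V)ᴴ, I) for every unitary V ∈ Mₙ(ℂ). -/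
open Matrix
open scoped ComplexOrder

/-!
Put `E = fromBlocks 1 0 0 0`. A projection `P` satisfies `(P - E)² = 1/2` exactly when
`P = (1/2) • fromBlocks 1 V Vᴴ 1` with `V` unitary, so it suffices that `φ` and `φ⁻¹` preserve this
equation; as `(1/2) • fromBlocks 1 V Vᴴ 1` and its analogue for `W` differ by an off-diagonal matrix
with entries `(V - W)/2` and its adjoint, distances between such projections are half of
`‖V - W‖_p`.

Both `(P - E)²` and `(P - (1 - E))² = 1 - (P - E)²` have their spectrum in `[0, 1]`. Hence `1 - E`
is the only projection at maximal distance from `E`, and `φ (1 - E) = 1 - φ E`. If `p ≠ 2`, the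
function `x ^ (p / 2) + (1 - x) ^ (p / 2)` has a strict extremum at `x = 1/2`, so the distances from
`P` to `E` and to `1 - E` detect the equation `(P - E)² = 1/2`.

If `p = 2`, these two distances carry the same information, and a third projection is needed. The
distances determine the Hilbert–Schmidt inner products of the symmetries `2P - 1`, so a linear
relation between symmetries is preserved by `φ`. With `s² = 1/2`, the equation `(P - E)² = 1/2`
says that `s((2P - 1) + (2E - 1))` squares to `1`, that is, that it equals `2T - 1` for some
projection `T`.
-/

section SpectralSum

variable {m k : Type*} [Fintype m] [DecidableEq m] [Fintype k] [DecidableEq k]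

/-- The sum of `f` over the eigenvalues of a matrix with real spectrum, counted with algebraic
multiplicity: the trace of `f(A)` when `A` is Hermitian. It is read off the characteristic
polynomial so that it is visibly a similarity invariant. -/
noncomputable def spectralSum (f : ℝ → ℝ) (A : Matrix m m ℂ) : ℝ :=
  (A.charpoly.roots.map fun z => f z.re).sum

theorem spectralSum_eq_sum_eigenvalues (f : ℝ → ℝ) {A : Matrix m m ℂ} (hA : A.IsHermitian) :
    spectralSum f A = ∑ i, f (hA.eigenvalues i) := by
  simp [spectralSum, hA.roots_charpoly_eq_eigenvalues]

theorem spectralSum_cfc (f g : ℝ → ℝ) {A : Matrix m m ℂ} (hA : A.IsHermitian) :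
    spectralSum f (cfc g A) = spectralSum (f ∘ g) A := by
  rw [spectralSum_eq_sum_eigenvalues _ hA, spectralSum, hA.charpoly_cfc_eq,
    Polynomial.roots_prod _ _ (Finset.prod_ne_zero_iff.2 fun i _ => Polynomial.X_sub_C_ne_zero _)]
  simp

theorem spectralSum_one_sub (f : ℝ → ℝ) {A : Matrix m m ℂ} (hA : A.IsHermitian) :
    spectralSum f (1 - A) = spectralSum (fun x => f (1 - x)) A := by
  have hcfc : cfc (fun x : ℝ => 1 - x) A = 1 - A := by
    rw [cfc_sub (fun _ : ℝ => 1) (fun x => x) A, cfc_const_one ℝ A, cfc_id' ℝ A]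
  rw [← hcfc, spectralSum_cfc _ _ hA]
  rfl

theorem spectralSum_smul (f : ℝ → ℝ) (c : ℝ) {A : Matrix m m ℂ} (hA : A.IsHermitian) :
    spectralSum f (c • A) = spectralSum (fun x => f (c * x)) A := by
  rw [← cfc_const_mul_id c A, spectralSum_cfc _ _ hA]
  rfl

theorem spectralSum_smul_one (f : ℝ → ℝ) (c : ℝ) :
    spectralSum f (c • (1 : Matrix m m ℂ)) = Fintype.card m * f c := by
  have hone : (1 : Matrix m m ℂ).IsHermitian := isHermitian_one
  rw [← Algebra.algebraMap_eq_smul_one, ← cfc_const c 1, spectralSum_cfc _ _ hone,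
    spectralSum_eq_sum_eigenvalues _ hone]
  simp

theorem spectralSum_mul_comm (f : ℝ → ℝ) (A B : Matrix m m ℂ) :
    spectralSum f (A * B) = spectralSum f (B * A) := by
  rw [spectralSum, charpoly_mul_comm, spectralSum]

theorem spectralSum_fromBlocks_zero (f : ℝ → ℝ) (A : Matrix m m ℂ) (B : Matrix k k ℂ) :
    spectralSum f (fromBlocks A 0 0 B) = spectralSum f A + spectralSum f B := by
  rw [spectralSum, charpoly_fromBlocks_zero₁₂, Polynomial.roots_mul
    (mul_ne_zero A.charpoly_monic.ne_zero B.charpoly_monic.ne_zero), Multiset.map_add,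
    Multiset.sum_add, spectralSum, spectralSum]

theorem eq_smul_one_of_eigenvalues_eq_s15 {A : Matrix m m ℂ} (hA : A.IsHermitian) {c : ℝ}
    (h : ∀ i, hA.eigenvalues i = c) : A = c • 1 := by
  rw [← Algebra.algebraMap_eq_smul_one]
  refine CFC.eq_algebraMap_of_spectrum_subset_singleton (R := ℝ) A c ?_
  rw [hA.spectrum_real_eq_range_eigenvalues]
  rintro _ ⟨i, rfl⟩
  exact h i

theorem eigenvalues_le_one_of_posSemidef_one_sub {A : Matrix m m ℂ} (hA : A.IsHermitian)
    (h : (1 - A).PosSemidef) (i : m) : hA.eigenvalues i ≤ 1 := by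
  have hmem : 1 - hA.eigenvalues i ∈ spectrum ℝ (algebraMap ℝ _ 1 - A) := by
    rw [← spectrum.singleton_sub_eq]
    exact Set.sub_mem_sub rfl (hA.eigenvalues_mem_spectrum_real i)
  rw [map_one, h.isHermitian.spectrum_real_eq_range_eigenvalues] at hmem
  obtain ⟨j, hj⟩ := hmem
  exact sub_nonneg.1 (hj ▸ h.eigenvalues_nonneg j)

end SpectralSum

section LpNorm

variable {m k : Type*} [Fintype m] [DecidableEq m] [Fintype k] [DecidableEq k] {p : ℝ}

theorem spectralSum_conjTranspose_mul_self_nonneg (q : ℝ) (A : Matrix m m ℂ) :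
    0 ≤ spectralSum (· ^ q) (Aᴴ * A) := by
  rw [spectralSum_eq_sum_eigenvalues _ (isHermitian_conjTranspose_mul_self A)]
  exact Finset.sum_nonneg fun i _ =>
    Real.rpow_nonneg ((posSemidef_conjTranspose_mul_self A).eigenvalues_nonneg i) _

theorem lpnorm_eq_spectralSum (p : ℝ) (A : Matrix m m ℂ) :
    lpnorm p A = (spectralSum (· ^ (p / 2)) (Aᴴ * A) / Fintype.card m) ^ (1 / p) := by
  rw [lpnorm, spectralSum_eq_sum_eigenvalues _ (isHermitian_conjTranspose_mul_self A)]

theorem lpnorm_eq_lpnorm_iff (hp : p ≠ 0) {A B : Matrix m m ℂ} :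
    lpnorm p A = lpnorm p B ↔
      spectralSum (· ^ (p / 2)) (Aᴴ * A) = spectralSum (· ^ (p / 2)) (Bᴴ * B) := by
  rcases isEmpty_or_nonempty m with hm | hm
  · simp [Subsingleton.elim A B]
  have hcard : (0 : ℝ) < Fintype.card m := by exact_mod_cast Fintype.card_pos
  have hnonneg (C : Matrix m m ℂ) :
      0 ≤ spectralSum (· ^ (p / 2)) (Cᴴ * C) / Fintype.card m :=
    div_nonneg (spectralSum_conjTranspose_mul_self_nonneg _ C) hcard.le
  rw [lpnorm_eq_spectralSum, lpnorm_eq_spectralSum,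
    Real.rpow_left_inj (hnonneg A) (hnonneg B) (one_div_ne_zero hp), div_left_inj' hcard.ne']

theorem lpnorm_two_eq_lpnorm_two_iff {A B : Matrix m m ℂ} :
    lpnorm 2 A = lpnorm 2 B ↔ (Aᴴ * A).trace = (Bᴴ * B).trace := by
  have htrace (C : Matrix m m ℂ) :
      (spectralSum (· ^ ((2 : ℝ) / 2)) (Cᴴ * C) : ℂ) = (Cᴴ * C).trace := by
    rw [spectralSum_eq_sum_eigenvalues _ (isHermitian_conjTranspose_mul_self C),
      (isHermitian_conjTranspose_mul_self C).trace_eq_sum_eigenvalues]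
    simp
  rw [lpnorm_eq_lpnorm_iff two_ne_zero, ← htrace, ← htrace, Complex.ofReal_inj]

theorem lpnorm_smul (hp : p ≠ 0) (c : ℝ) (A : Matrix m m ℂ) :
    lpnorm p (c • A) = |c| * lpnorm p A := by
  have hA := posSemidef_conjTranspose_mul_self A
  have hcp : (c * c) ^ (p / 2) = |c| ^ p := by
    rw [← abs_mul_abs_self, ← sq, ← Real.rpow_natCast_mul (abs_nonneg c)]
    congr 1
    push_cast
    ring
  have hsum : spectralSum (· ^ (p / 2)) ((c • A)ᴴ * (c • A)) =
      |c| ^ p * spectralSum (· ^ (p / 2)) (Aᴴ * A) := by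
    rw [conjTranspose_smul, star_trivial, smul_mul_smul_comm,
      spectralSum_smul _ _ hA.isHermitian, spectralSum_eq_sum_eigenvalues _ hA.isHermitian,
      spectralSum_eq_sum_eigenvalues _ hA.isHermitian, Finset.mul_sum]
    exact Finset.sum_congr rfl fun i _ => by
      rw [Real.mul_rpow (mul_self_nonneg c) (hA.eigenvalues_nonneg i), hcp]
  rw [lpnorm_eq_spectralSum, lpnorm_eq_spectralSum, hsum, mul_div_assoc,
    Real.mul_rpow (by positivity)
      (div_nonneg (spectralSum_conjTranspose_mul_self_nonneg _ A) (Nat.cast_nonneg _)),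
    ← Real.rpow_mul (abs_nonneg c), mul_one_div_cancel hp, Real.rpow_one]

theorem lpnorm_fromBlocks_zero_conjTranspose (p : ℝ) (A : Matrix k k ℂ) :
    lpnorm p (fromBlocks 0 A Aᴴ 0) = lpnorm p A := by
  rw [lpnorm_eq_spectralSum, lpnorm_eq_spectralSum, fromBlocks_conjTranspose, fromBlocks_multiply]
  simp only [conjTranspose_zero, zero_mul, mul_zero, add_zero, zero_add,
    conjTranspose_conjTranspose]
  rw [spectralSum_fromBlocks_zero, spectralSum_mul_comm _ A, Fintype.card_sum, Nat.cast_add,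
    ← two_mul, ← two_mul, mul_div_mul_left _ _ two_ne_zero]

end LpNorm

section Symmetry

variable {R : Type*} [Ring R] {P E : R}

/-- The symmetry `2P - 1` attached to a projection `P`: the reflection in the range of `P`. -/
def symmetryOf (P : R) : R := 2 • P - 1

theorem isSelfAdjoint_symmetryOf [StarRing R] (hP : IsSelfAdjoint P) :
    IsSelfAdjoint (symmetryOf P) :=
  ((IsSelfAdjoint.all (2 : ℕ)).smul hP).sub (.one R)

theorem symmetryOf_sub_symmetryOf (P E : R) : symmetryOf P - symmetryOf E = 2 • (P - E) := by
  rw [symmetryOf, symmetryOf, smul_sub, sub_sub_sub_cancel_right]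

theorem symmetryOf_sq (hP : IsIdempotentElem P) : symmetryOf P ^ 2 = 1 := by
  simp only [symmetryOf, sq, mul_sub, sub_mul, smul_mul_assoc, mul_smul_comm, hP.eq, mul_one,
    one_mul]
  abel

theorem sub_one_sub_sq (hP : IsIdempotentElem P) (hE : IsIdempotentElem E) :
    (P - (1 - E)) ^ 2 = 1 - (P - E) ^ 2 := by
  simp only [sq, mul_sub, sub_mul, hP.eq, hE.eq, mul_one, one_mul]
  abel

theorem symmetryOf_add_symmetryOf_sq (hP : IsIdempotentElem P) (hE : IsIdempotentElem E) :
    (symmetryOf P + symmetryOf E) ^ 2 = 4 • (1 - (P - E) ^ 2) := by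
  have hadd : symmetryOf P + symmetryOf E = 2 • (P - (1 - E)) := by
    simp only [symmetryOf]
    abel
  rw [hadd, smul_pow, sub_one_sub_sq hP hE, show 2 ^ 2 = 4 from rfl]

end Symmetry

section Convexity

theorem eq_half_of_sum_add_eq {ι : Type*} [Fintype ι] {f : ℝ → ℝ}
    (hf : StrictConvexOn ℝ (Set.Icc 0 1) f) {x : ι → ℝ} (hx : ∀ i, x i ∈ Set.Icc 0 1)
    (hsum : ∑ i, (f (x i) + f (1 - x i)) = ∑ _i : ι, 2 * f (1 / 2)) (i : ι) : x i = 1 / 2 := by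
  have hmem (j : ι) : 1 - x j ∈ Set.Icc (0 : ℝ) 1 := Set.Icc.mem_iff_one_sub_mem.1 (hx j)
  have hmid (j : ι) : (1 / 2 : ℝ) • x j + (1 / 2 : ℝ) • (1 - x j) = 1 / 2 := by
    simp only [smul_eq_mul]
    ring
  have hle (j : ι) : 2 * f (1 / 2) ≤ f (x j) + f (1 - x j) := by
    have h := hf.convexOn.2 (hx j) (hmem j) one_half_pos.le one_half_pos.le (add_halves 1)
    rw [hmid, smul_eq_mul, smul_eq_mul] at h
    linarith
  have heq := (Finset.sum_eq_sum_iff_of_le fun j _ => hle j).1 hsum.symm i (Finset.mem_univ i)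
  by_contra hne
  have h := hf.2 (hx i) (hmem i) (fun h => hne (by linarith)) one_half_pos one_half_pos
    (add_halves 1)
  rw [hmid, smul_eq_mul, smul_eq_mul] at h
  linarith

theorem eq_half_of_sum_rpow_add_rpow_eq {ι : Type*} [Fintype ι] {q : ℝ} (hq₀ : 0 < q) (hq : q ≠ 1)
    {x : ι → ℝ} (hx : ∀ i, x i ∈ Set.Icc 0 1)
    (hsum : ∑ i, (x i ^ q + (1 - x i) ^ q) = ∑ _i : ι, 2 * (1 / 2 : ℝ) ^ q) (i : ι) :
    x i = 1 / 2 := by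
  rcases hq.lt_or_gt with hq | hq
  · refine eq_half_of_sum_add_eq (f := fun t => -t ^ q)
      ((Real.strictConcaveOn_rpow hq₀ hq).neg.subset Set.Icc_subset_Ici_self (convex_Icc 0 1))
      hx ?_ i
    simpa only [← neg_add, mul_neg, Finset.sum_neg_distrib, neg_inj] using hsum
  · exact eq_half_of_sum_add_eq
      ((strictConvexOn_rpow hq).subset Set.Icc_subset_Ici_self (convex_Icc 0 1)) hx hsum i

end Convexity

section Projection

variable {m : Type*} [Fintype m] [DecidableEq m] {p : ℝ} {A B P E T P' E' T' : Matrix m m ℂ}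

theorem conjTranspose_mul_self_eq_sq (hA : IsSelfAdjoint A) : Aᴴ * A = A ^ 2 := by
  rw [← star_eq_conjTranspose, hA.star_eq, sq]

theorem posSemidef_sq (hA : IsSelfAdjoint A) : (A ^ 2).PosSemidef :=
  conjTranspose_mul_self_eq_sq hA ▸ posSemidef_conjTranspose_mul_self A

theorem lpnorm_eq_lpnorm_iff_of_isSelfAdjoint (hp : p ≠ 0) (hA : IsSelfAdjoint A)
    (hB : IsSelfAdjoint B) :
    lpnorm p A = lpnorm p B ↔
      spectralSum (· ^ (p / 2)) (A ^ 2) = spectralSum (· ^ (p / 2)) (B ^ 2) := by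
  rw [lpnorm_eq_lpnorm_iff hp, conjTranspose_mul_self_eq_sq hA, conjTranspose_mul_self_eq_sq hB]

theorem eigenvalues_sub_sq_mem_Icc (hP : IsStarProjection P) (hE : IsStarProjection E) (i : m) :
    (posSemidef_sq (hP.2.sub hE.2)).isHermitian.eigenvalues i ∈ Set.Icc 0 1 := by
  refine ⟨(posSemidef_sq (hP.2.sub hE.2)).eigenvalues_nonneg i,
    eigenvalues_le_one_of_posSemidef_one_sub _ ?_ i⟩
  rw [← sub_one_sub_sq hP.1 hE.1]
  exact posSemidef_sq (hP.2.sub hE.one_sub.2)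

theorem eq_one_sub_of_lpnorm_sub_eq (hp : 0 < p) (hP : IsStarProjection P)
    (hE : IsStarProjection E) (hE' : IsStarProjection E')
    (h : lpnorm p (P - E) = lpnorm p ((1 - E') - E')) : P = 1 - E := by
  have hmax : ((1 - E') - E') ^ 2 = (1 : ℝ) • 1 := by
    rw [← neg_sub, neg_sq, sub_one_sub_sq hE'.1 hE'.1]
    simp
  have hA := posSemidef_sq (hP.2.sub hE.2)
  have hmem := eigenvalues_sub_sq_mem_Icc hP hE
  rw [lpnorm_eq_lpnorm_iff_of_isSelfAdjoint hp.ne' (hP.2.sub hE.2) (hE'.one_sub.2.sub hE'.2),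
    hmax, spectralSum_smul_one, spectralSum_eq_sum_eigenvalues _ hA.isHermitian,
    Real.one_rpow] at h
  have hrpow := (Finset.sum_eq_sum_iff_of_le fun i _ =>
    Real.rpow_le_one (hmem i).1 (hmem i).2 (half_pos hp).le).1 (h.trans (by simp))
  have hone : (P - E) ^ 2 = (1 : ℝ) • 1 := eq_smul_one_of_eigenvalues_eq_s15 hA.isHermitian fun i =>
    (Real.rpow_left_inj (hmem i).1 zero_le_one (half_pos hp).ne').1
      ((hrpow i (Finset.mem_univ i)).trans (Real.one_rpow _).symm)
  have hzero : (P - (1 - E))ᴴ * (P - (1 - E)) = 0 := by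
    rw [conjTranspose_mul_self_eq_sq (hP.2.sub hE.one_sub.2),
      sub_one_sub_sq hP.1 hE.1, hone, one_smul, sub_self]
  exact sub_eq_zero.1 (conjTranspose_mul_self_eq_zero.1 hzero)

theorem sub_sq_eq_half_of_lpnorm_sub_eq (hp : 0 < p) (hp₂ : p ≠ 2) (hP : IsStarProjection P)
    (hE : IsStarProjection E) (hP' : IsStarProjection P') (hE' : IsStarProjection E')
    (hhalf : (P - E) ^ 2 = (1 / 2 : ℝ) • 1) (h : lpnorm p (P' - E') = lpnorm p (P - E))
    (hcompl : lpnorm p (P' - (1 - E')) = lpnorm p (P - (1 - E))) :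
    (P' - E') ^ 2 = (1 / 2 : ℝ) • 1 := by
  have hA := (posSemidef_sq (hP'.2.sub hE'.2)).isHermitian
  have hhalf' : 1 - (P - E) ^ 2 = (1 / 2 : ℝ) • 1 := by
    rw [hhalf]
    module
  rw [lpnorm_eq_lpnorm_iff_of_isSelfAdjoint hp.ne' (hP'.2.sub hE'.2) (hP.2.sub hE.2),
    hhalf, spectralSum_smul_one, spectralSum_eq_sum_eigenvalues _ hA] at h
  rw [lpnorm_eq_lpnorm_iff_of_isSelfAdjoint hp.ne' (hP'.2.sub hE'.one_sub.2)
      (hP.2.sub hE.one_sub.2),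
    sub_one_sub_sq hP.1 hE.1, hhalf', spectralSum_smul_one, sub_one_sub_sq hP'.1 hE'.1,
    spectralSum_one_sub _ hA, spectralSum_eq_sum_eigenvalues _ hA] at hcompl
  refine eq_smul_one_of_eigenvalues_eq_s15 hA (eq_half_of_sum_rpow_add_rpow_eq (half_pos hp)
    (fun hq => hp₂ (by linarith)) (eigenvalues_sub_sq_mem_Icc hP' hE') ?_)
  rw [Finset.sum_add_distrib, h, hcompl, Finset.sum_const, Finset.card_univ, nsmul_eq_mul]
  ring

theorem trace_sub_smul_add_sq (X Y Z : Matrix m m ℂ) (s : ℝ) :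
    ((Z - s • (X + Y)) ^ 2).trace =
      (1 - 2 * s) * (Z ^ 2).trace + (2 * s ^ 2 - s) * ((X ^ 2).trace + (Y ^ 2).trace) -
        s ^ 2 * ((X - Y) ^ 2).trace + s * (((Z - X) ^ 2).trace + ((Z - Y) ^ 2).trace) := by
  simp only [sq, mul_sub, sub_mul, mul_add, add_mul, smul_mul_assoc, mul_smul_comm, smul_add,
    trace_sub, trace_add, trace_smul, Complex.real_smul, trace_mul_comm Y X, trace_mul_comm X Z,
    trace_mul_comm Y Z]
  ring

theorem trace_symmetryOf_sub_sq_eq (hP : IsSelfAdjoint P) (hE : IsSelfAdjoint E)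
    (hP' : IsSelfAdjoint P') (hE' : IsSelfAdjoint E')
    (h : lpnorm 2 (P' - E') = lpnorm 2 (P - E)) :
    ((symmetryOf P' - symmetryOf E') ^ 2).trace = ((symmetryOf P - symmetryOf E) ^ 2).trace := by
  rw [lpnorm_two_eq_lpnorm_two_iff, conjTranspose_mul_self_eq_sq (hP'.sub hE'),
    conjTranspose_mul_self_eq_sq (hP.sub hE)] at h
  rw [symmetryOf_sub_symmetryOf, symmetryOf_sub_symmetryOf, smul_pow, smul_pow, trace_smul,
    trace_smul, h]

theorem symmetryOf_eq_smul_add_of_lpnorm_two_eq {s : ℝ} (hP : IsStarProjection P)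
    (hE : IsStarProjection E) (hT : IsStarProjection T) (hP' : IsStarProjection P')
    (hE' : IsStarProjection E') (hT' : IsStarProjection T')
    (hPE : lpnorm 2 (P' - E') = lpnorm 2 (P - E)) (hTP : lpnorm 2 (T' - P') = lpnorm 2 (T - P))
    (hTE : lpnorm 2 (T' - E') = lpnorm 2 (T - E))
    (hmid : symmetryOf T = s • (symmetryOf P + symmetryOf E)) :
    symmetryOf T' = s • (symmetryOf P' + symmetryOf E') := by
  have hsymm {Q : Matrix m m ℂ} (hQ : IsStarProjection Q) := isSelfAdjoint_symmetryOf hQ.2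
  have hzero : ((symmetryOf T' - s • (symmetryOf P' + symmetryOf E')) ^ 2).trace = 0 :=
    calc
      _ = ((symmetryOf T - s • (symmetryOf P + symmetryOf E)) ^ 2).trace := by
        rw [trace_sub_smul_add_sq, trace_sub_smul_add_sq, symmetryOf_sq hP.1, symmetryOf_sq hE.1,
          symmetryOf_sq hT.1, symmetryOf_sq hP'.1, symmetryOf_sq hE'.1, symmetryOf_sq hT'.1,
          trace_symmetryOf_sub_sq_eq hP.2 hE.2 hP'.2 hE'.2 hPE,
          trace_symmetryOf_sub_sq_eq hT.2 hP.2 hT'.2 hP'.2 hTP,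
          trace_symmetryOf_sub_sq_eq hT.2 hE.2 hT'.2 hE'.2 hTE]
      _ = 0 := by rw [hmid, sub_self, sq, zero_mul, trace_zero]
  have hadj : IsSelfAdjoint (symmetryOf T' - s • (symmetryOf P' + symmetryOf E')) :=
    (hsymm hT').sub ((IsSelfAdjoint.all s).smul ((hsymm hP').add (hsymm hE')))
  rw [sq] at hzero
  nth_rewrite 1 [← hadj.star_eq] at hzero
  exact sub_eq_zero.1 (trace_conjTranspose_mul_self_eq_zero_iff.1 hzero)

theorem sub_sq_eq_half_of_symmetryOf_eq {s : ℝ} (hs : s ^ 2 = 1 / 2) (hP : IsStarProjection P)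
    (hE : IsStarProjection E) (hT : IsStarProjection T)
    (hmid : symmetryOf T = s • (symmetryOf P + symmetryOf E)) :
    (P - E) ^ 2 = (1 / 2 : ℝ) • 1 := by
  have hsq := symmetryOf_sq hT.1
  rw [hmid, smul_pow, hs, symmetryOf_add_symmetryOf_sq hP.1 hE.1]
    at hsq
  calc (P - E) ^ 2 = 1 - (1 / 2 : ℝ) • ((1 / 2 : ℝ) • 4 • (1 - (P - E) ^ 2)) := by module
    _ = (1 / 2 : ℝ) • 1 := by
      rw [hsq]
      module

end Projection

section HalfTraceProjections

variable {m : Type*} [Fintype m] [DecidableEq m] {p : ℝ} {P E : Matrix m m ℂ}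
  {φ : Matrix m m ℂ → Matrix m m ℂ} {S : Set (Matrix m m ℂ)}

/-- The set `𝒫_{1/2}` of projections of normalized trace `1/2`, on which the isometries act. The
trace condition is multiplied out to `2 Tr P = m`. -/
def halfTraceProjections (m : Type*) [Fintype m] : Set (Matrix m m ℂ) :=
  {P | IsStarProjection P ∧ 2 * P.trace = Fintype.card m}

theorem one_sub_mem_halfTraceProjections (hE : E ∈ halfTraceProjections m) :
    1 - E ∈ halfTraceProjections m := by
  refine ⟨hE.1.one_sub, ?_⟩
  rw [trace_sub, trace_one, mul_sub, hE.2]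
  ring

theorem exists_symmetryOf_eq_smul_add {s : ℝ} (hs : s ^ 2 = 1 / 2)
    (hP : P ∈ halfTraceProjections m) (hE : E ∈ halfTraceProjections m)
    (hhalf : (P - E) ^ 2 = (1 / 2 : ℝ) • 1) :
    ∃ T ∈ halfTraceProjections m, symmetryOf T = s • (symmetryOf P + symmetryOf E) := by
  set Z := P - (1 - E) with hZ
  have hsq : Z * Z = (1 / 2 : ℝ) • 1 := by
    rw [← sq, sub_one_sub_sq hP.1.1 hE.1.1, hhalf]
    module
  have hss : (s • Z) * (s • Z) = (1 / 4 : ℝ) • 1 := by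
    rw [smul_mul_smul_comm, hsq, ← sq, hs]
    module
  have htrace : Z.trace = 0 := by
    have hE' := (one_sub_mem_halfTraceProjections hE).2
    rw [← hP.2] at hE'
    rw [trace_sub, mul_left_cancel₀ two_ne_zero hE', sub_self]
  refine ⟨(1 / 2 : ℝ) • 1 + s • Z, ⟨⟨?_, ?_⟩, ?_⟩, ?_⟩
  · rw [IsIdempotentElem, mul_add, add_mul, add_mul, hss]
    simp only [smul_mul_assoc, mul_smul_comm, one_mul, mul_one]
    module
  · exact ((IsSelfAdjoint.all _).smul (.one _)).add
      ((IsSelfAdjoint.all s).smul (hP.1.isSelfAdjoint.sub hE.1.one_sub.isSelfAdjoint))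
  · rw [trace_add, trace_smul, trace_smul, htrace, trace_one, smul_zero, add_zero,
      Complex.real_smul]
    push_cast
    ring
  · simp only [symmetryOf, hZ]
    module

/-- `φ` preserves the `L^p`-distance on `S`; its values outside `S` are irrelevant. -/
def IsLpIsometryOn (p : ℝ) (φ : Matrix m m ℂ → Matrix m m ℂ) (S : Set (Matrix m m ℂ)) : Prop :=
  ∀ ⦃P⦄, P ∈ S → ∀ ⦃Q⦄, Q ∈ S → lpnorm p (φ P - φ Q) = lpnorm p (P - Q)

theorem IsLpIsometryOn.invFunOn (hφ : IsLpIsometryOn p φ S) (hsurj : S.SurjOn φ S) :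
    IsLpIsometryOn p (Function.invFunOn φ S) S := by
  intro P hP Q hQ
  rw [← hφ (hsurj.mapsTo_invFunOn hP) (hsurj.mapsTo_invFunOn hQ),
    hsurj.rightInvOn_invFunOn hP, hsurj.rightInvOn_invFunOn hQ]

theorem IsLpIsometryOn.map_one_sub (hφ : IsLpIsometryOn p φ (halfTraceProjections m)) (hp : 0 < p)
    (hmaps : Set.MapsTo φ (halfTraceProjections m) (halfTraceProjections m))
    (hE : E ∈ halfTraceProjections m) : φ (1 - E) = 1 - φ E :=
  have hE' := one_sub_mem_halfTraceProjections hE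
  eq_one_sub_of_lpnorm_sub_eq hp (hmaps hE').1 (hmaps hE).1 hE.1 (hφ hE' hE)

theorem IsLpIsometryOn.injOn (hφ : IsLpIsometryOn p φ (halfTraceProjections m)) (hp : 0 < p) :
    Set.InjOn φ (halfTraceProjections m) := by
  intro P hP Q hQ h
  have hQ' := one_sub_mem_halfTraceProjections hQ
  have hdist : lpnorm p (P - (1 - Q)) = lpnorm p ((1 - (1 - Q)) - (1 - Q)) := by
    rw [← hφ hP hQ', h, hφ hQ hQ', sub_sub_cancel 1 Q]
  rw [eq_one_sub_of_lpnorm_sub_eq hp hP.1 hQ'.1 hQ'.1 hdist, sub_sub_cancel]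

theorem IsLpIsometryOn.map_sub_map_sq (hφ : IsLpIsometryOn p φ (halfTraceProjections m))
    (hp : 0 < p) (hmaps : Set.MapsTo φ (halfTraceProjections m) (halfTraceProjections m))
    (hP : P ∈ halfTraceProjections m) (hE : E ∈ halfTraceProjections m)
    (hhalf : (P - E) ^ 2 = (1 / 2 : ℝ) • 1) : (φ P - φ E) ^ 2 = (1 / 2 : ℝ) • 1 := by
  rcases eq_or_ne p 2 with rfl | hp₂
  · have hs : (√(1 / 2) : ℝ) ^ 2 = 1 / 2 := Real.sq_sqrt one_half_pos.le
    obtain ⟨T, hT, hmid⟩ := exists_symmetryOf_eq_smul_add hs hP hE hhalf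
    exact sub_sq_eq_half_of_symmetryOf_eq hs (hmaps hP).1 (hmaps hE).1 (hmaps hT).1
      (symmetryOf_eq_smul_add_of_lpnorm_two_eq hP.1 hE.1 hT.1 (hmaps hP).1 (hmaps hE).1
        (hmaps hT).1 (hφ hP hE) (hφ hT hP) (hφ hT hE) hmid)
  · refine sub_sq_eq_half_of_lpnorm_sub_eq hp hp₂ hP.1 hE.1 (hmaps hP).1 (hmaps hE).1 hhalf
      (hφ hP hE) ?_
    rw [← hφ.map_one_sub hp hmaps hE, hφ hP (one_sub_mem_halfTraceProjections hE)]

end HalfTraceProjections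

section GraphProjection

theorem fromBlocks_sub {l m n o α : Type*} [AddGroup α] (A : Matrix n l α) (B : Matrix n m α)
    (C : Matrix o l α) (D : Matrix o m α) (A' : Matrix n l α) (B' : Matrix n m α)
    (C' : Matrix o l α) (D' : Matrix o m α) :
    fromBlocks A B C D - fromBlocks A' B' C' D' =
      fromBlocks (A - A') (B - B') (C - C') (D - D') := by
  simp only [sub_eq_add_neg, fromBlocks_neg, fromBlocks_add]

variable {k : Type*}

/-- For unitary `V`, the projection onto the graph `{(V x, x)}` of `V`: the projections
`½ [[1, V], [Vᴴ, 1]]` on which the induced map `ψ` is read off. -/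
noncomputable def graphProj [DecidableEq k] (V : Matrix k k ℂ) : Matrix (k ⊕ k) (k ⊕ k) ℂ :=
  (2 : ℂ)⁻¹ • fromBlocks 1 V Vᴴ 1

theorem graphProj_injective [DecidableEq k] : (graphProj (k := k)).Injective := fun _ _ h =>
  (fromBlocks_inj.1 (smul_right_injective _ (inv_ne_zero two_ne_zero) h)).2.1

variable [Fintype k]

theorem mem_halfTraceProjections_sum_iff {P : Matrix (k ⊕ k) (k ⊕ k) ℂ} :
    P ∈ halfTraceProjections (k ⊕ k) ↔ Pᴴ = P ∧ P * P = P ∧ P.trace = Fintype.card k := by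
  have htrace : 2 * P.trace = Fintype.card (k ⊕ k) ↔ P.trace = Fintype.card k := by
    rw [Fintype.card_sum, Nat.cast_add, ← two_mul, mul_right_inj' two_ne_zero]
  rw [halfTraceProjections, Set.mem_ofPred_eq, htrace, isStarProjection_iff]
  tauto

variable [DecidableEq k] {V : Matrix k k ℂ}

theorem fromBlocks_one_zero_mem_halfTraceProjections :
    (fromBlocks 1 0 0 0 : Matrix (k ⊕ k) (k ⊕ k) ℂ) ∈ halfTraceProjections (k ⊕ k) := by
  simp [mem_halfTraceProjections_sum_iff, fromBlocks_conjTranspose, fromBlocks_multiply, trace]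

theorem graphProj_mem_halfTraceProjections (hV : V ∈ unitaryGroup k ℂ) :
    graphProj V ∈ halfTraceProjections (k ⊕ k) := by
  have hVV : V * Vᴴ = 1 := mem_unitaryGroup_iff.1 hV
  have hVV' : Vᴴ * V = 1 := mem_unitaryGroup_iff'.1 hV
  refine mem_halfTraceProjections_sum_iff.2 ⟨?_, ?_, ?_⟩
  · simp [graphProj, conjTranspose_smul, fromBlocks_conjTranspose]
  · simp only [graphProj, smul_mul_assoc, mul_smul_comm, fromBlocks_multiply, hVV, hVV', mul_one,
      one_mul, fromBlocks_smul]
    congr 1 <;> module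
  · rw [graphProj, trace_smul, trace, Fintype.sum_sum_type]
    simp only [diag_apply, fromBlocks_apply₁₁, fromBlocks_apply₂₂, one_apply_eq, Finset.sum_const,
      Finset.card_univ, nsmul_eq_mul, mul_one, smul_eq_mul]
    ring

theorem graphProj_sub_sq (hV : V ∈ unitaryGroup k ℂ) :
    (graphProj V - fromBlocks 1 0 0 0) ^ 2 = (1 / 2 : ℝ) • 1 := by
  have hVV : V * Vᴴ = 1 := mem_unitaryGroup_iff.1 hV
  have hVV' : Vᴴ * V = 1 := mem_unitaryGroup_iff'.1 hV
  rw [sq, ← fromBlocks_one]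
  simp only [graphProj, fromBlocks_smul, fromBlocks_sub, fromBlocks_multiply, mul_sub, sub_mul,
    smul_mul_assoc, mul_smul_comm, hVV, hVV', mul_one, one_mul, sub_zero, smul_zero]
  congr 1 <;> module

theorem exists_eq_graphProj {P : Matrix (k ⊕ k) (k ⊕ k) ℂ} (hP : IsStarProjection P)
    (hhalf : (P - fromBlocks 1 0 0 0) ^ 2 = (1 / 2 : ℝ) • 1) :
    ∃ V ∈ unitaryGroup k ℂ, P = graphProj V := by
  obtain ⟨A, B, C, D, rfl⟩ : ∃ A B C D, P = fromBlocks A B C D :=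
    ⟨_, _, _, _, (fromBlocks_toBlocks P).symm⟩
  have hadj := hP.isSelfAdjoint.star_eq
  rw [star_eq_conjTranspose, fromBlocks_conjTranspose, fromBlocks_inj] at hadj
  obtain ⟨-, -, hBC, -⟩ := hadj
  have hidem := hP.isIdempotentElem.eq
  have hE := (fromBlocks_one_zero_mem_halfTraceProjections (k := k)).1.isIdempotentElem.eq
  have hexpand : fromBlocks A B C D + fromBlocks 1 0 0 0 -
      (fromBlocks A B C D * fromBlocks 1 0 0 0 + fromBlocks 1 0 0 0 * fromBlocks A B C D) =
        (1 / 2 : ℝ) • (1 : Matrix (k ⊕ k) (k ⊕ k) ℂ) := by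
    rw [← hhalf, sq, sub_mul, mul_sub, mul_sub, hidem, hE]
    abel
  simp only [fromBlocks_multiply, fromBlocks_sub, fromBlocks_add, ← fromBlocks_one,
    fromBlocks_smul, fromBlocks_inj, mul_one, mul_zero, one_mul, zero_mul, add_zero,
    sub_zero] at hexpand
  obtain ⟨hA, -, -, hD⟩ := hexpand
  replace hA : A = (1 / 2 : ℝ) • 1 := by
    rw [add_sub_add_left_eq_sub] at hA
    rw [← sub_sub_cancel 1 A, hA]
    module
  rw [fromBlocks_multiply, fromBlocks_inj] at hidem
  have hBB : B * Bᴴ = (1 / 4 : ℝ) • 1 := by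
    rw [hBC, eq_sub_of_add_eq' hidem.1, hA, smul_mul_smul_comm, one_mul]
    module
  refine ⟨(2 : ℝ) • B, ?_, ?_⟩
  · rw [mem_unitaryGroup_iff, star_eq_conjTranspose, conjTranspose_smul, star_trivial,
      smul_mul_smul_comm, hBB]
    module
  · rw [graphProj, conjTranspose_smul, star_trivial, hBC, fromBlocks_smul, hA, hD]
    congr 1 <;> module

variable {p : ℝ}

theorem lpnorm_graphProj_sub (hp : p ≠ 0) (V W : Matrix k k ℂ) :
    lpnorm p (graphProj V - graphProj W) = 2⁻¹ * lpnorm p (V - W) := by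
  have hsub : graphProj V - graphProj W = (2⁻¹ : ℝ) • fromBlocks 0 (V - W) (V - W)ᴴ 0 := by
    simp only [graphProj, ← smul_sub, fromBlocks_sub, sub_self, conjTranspose_sub]
    module
  rw [hsub, lpnorm_smul hp, lpnorm_fromBlocks_zero_conjTranspose, abs_of_pos (by positivity)]

variable {φ : Matrix (k ⊕ k) (k ⊕ k) ℂ → Matrix (k ⊕ k) (k ⊕ k) ℂ}

theorem IsLpIsometryOn.exists_map_graphProj_eq (hp : 0 < p)
    (hφ : IsLpIsometryOn p φ (halfTraceProjections (k ⊕ k)))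
    (hmaps : Set.MapsTo φ (halfTraceProjections (k ⊕ k)) (halfTraceProjections (k ⊕ k)))
    (hfix : φ (fromBlocks 1 0 0 0) = fromBlocks 1 0 0 0) (hV : V ∈ unitaryGroup k ℂ) :
    ∃ W ∈ unitaryGroup k ℂ, φ (graphProj V) = graphProj W := by
  have hP := graphProj_mem_halfTraceProjections hV
  refine exists_eq_graphProj (hmaps hP).1 ?_
  have hsq := hφ.map_sub_map_sq hp hmaps hP fromBlocks_one_zero_mem_halfTraceProjections
    (graphProj_sub_sq hV)
  rwa [hfix] at hsq

theorem IsLpIsometryOn.exists_isLpIsometryOn_unitaryGroup (hp : 0 < p)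
    (hφ : IsLpIsometryOn p φ (halfTraceProjections (k ⊕ k)))
    (hmaps : Set.MapsTo φ (halfTraceProjections (k ⊕ k)) (halfTraceProjections (k ⊕ k)))
    (hsurj : Set.SurjOn φ (halfTraceProjections (k ⊕ k)) (halfTraceProjections (k ⊕ k)))
    (hfix : φ (fromBlocks 1 0 0 0) = fromBlocks 1 0 0 0) :
    ∃ ψ : Matrix k k ℂ → Matrix k k ℂ, Set.MapsTo ψ (unitaryGroup k ℂ) (unitaryGroup k ℂ) ∧
      Set.SurjOn ψ (unitaryGroup k ℂ) (unitaryGroup k ℂ) ∧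
      IsLpIsometryOn p ψ (unitaryGroup k ℂ) ∧
      ∀ V ∈ unitaryGroup k ℂ, φ (graphProj V) = graphProj (ψ V) := by
  choose! ψ hψ hφψ using fun V => hφ.exists_map_graphProj_eq (V := V) hp hmaps hfix
  refine ⟨ψ, hψ, fun W hW => ?_, fun V hV W hW => ?_, hφψ⟩
  · have hfix' : Function.invFunOn φ (halfTraceProjections (k ⊕ k)) (fromBlocks 1 0 0 0) =
        fromBlocks 1 0 0 0 := by
      conv_lhs => rw [← hfix]
      exact (hφ.injOn hp).leftInvOn_invFunOn fromBlocks_one_zero_mem_halfTraceProjections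
    obtain ⟨V, hV, hVW⟩ := (hφ.invFunOn hsurj).exists_map_graphProj_eq hp
      hsurj.mapsTo_invFunOn hfix' hW
    refine ⟨V, hV, graphProj_injective ?_⟩
    rw [← hφψ V hV, ← hVW, hsurj.rightInvOn_invFunOn (graphProj_mem_halfTraceProjections hW)]
  · have hdist := hφ (graphProj_mem_halfTraceProjections hV) (graphProj_mem_halfTraceProjections hW)
    rwa [hφψ V hV, hφψ W hW, lpnorm_graphProj_sub hp.ne', lpnorm_graphProj_sub hp.ne',
      mul_right_inj' (by norm_num)] at hdist

end GraphProjection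

/-- A surjective `L^p`-isometry `φ` of the trace-`1/2` projections of
`M_{2n}(ℂ) = M₂(Mₙ(ℂ))` fixing `fromBlocks I 0 0 0` induces a surjective
`L^p`-isometry `ψ` of the unitary group of `Mₙ(ℂ)` via
`φ((1/2)·fromBlocks I V Vᴴ I) = (1/2)·fromBlocks I (ψV) (ψV)ᴴ I`. -/
theorem stmt15 (n : ℕ) (hn : 1 ≤ n) (p : ℝ) (hp : 0 < p)
    (φ : Matrix (Fin n ⊕ Fin n) (Fin n ⊕ Fin n) ℂ →
      Matrix (Fin n ⊕ Fin n) (Fin n ⊕ Fin n) ℂ)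
    (hmem : ∀ P : Matrix (Fin n ⊕ Fin n) (Fin n ⊕ Fin n) ℂ,
      Pᴴ = P → P * P = P → P.trace = (n : ℂ) →
      (φ P)ᴴ = φ P ∧ φ P * φ P = φ P ∧ (φ P).trace = (n : ℂ))
    (hsurj : ∀ Q : Matrix (Fin n ⊕ Fin n) (Fin n ⊕ Fin n) ℂ,
      Qᴴ = Q → Q * Q = Q → Q.trace = (n : ℂ) →
      ∃ P : Matrix (Fin n ⊕ Fin n) (Fin n ⊕ Fin n) ℂ,
        Pᴴ = P ∧ P * P = P ∧ P.trace = (n : ℂ) ∧ φ P = Q)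
    (hiso : ∀ P Q : Matrix (Fin n ⊕ Fin n) (Fin n ⊕ Fin n) ℂ,
      Pᴴ = P → P * P = P → P.trace = (n : ℂ) →
      Qᴴ = Q → Q * Q = Q → Q.trace = (n : ℂ) →
      lpnorm p (φ P - φ Q) = lpnorm p (P - Q))
    (hfix : φ (Matrix.fromBlocks 1 0 0 0) = Matrix.fromBlocks 1 0 0 0) :
    ∃ ψ : Matrix (Fin n) (Fin n) ℂ → Matrix (Fin n) (Fin n) ℂ,
      (∀ V ∈ Matrix.unitaryGroup (Fin n) ℂ, ψ V ∈ Matrix.unitaryGroup (Fin n) ℂ) ∧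
      (∀ V' ∈ Matrix.unitaryGroup (Fin n) ℂ,
        ∃ V ∈ Matrix.unitaryGroup (Fin n) ℂ, ψ V = V') ∧
      (∀ V ∈ Matrix.unitaryGroup (Fin n) ℂ, ∀ V' ∈ Matrix.unitaryGroup (Fin n) ℂ,
        lpnorm p (ψ V - ψ V') = lpnorm p (V - V')) ∧
      (∀ V ∈ Matrix.unitaryGroup (Fin n) ℂ,
        φ ((2 : ℂ)⁻¹ • Matrix.fromBlocks 1 V Vᴴ 1) =
          (2 : ℂ)⁻¹ • Matrix.fromBlocks 1 (ψ V) (ψ V)ᴴ 1) := by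
  have hmemS {P : Matrix (Fin n ⊕ Fin n) (Fin n ⊕ Fin n) ℂ} :
      P ∈ halfTraceProjections (Fin n ⊕ Fin n) ↔ Pᴴ = P ∧ P * P = P ∧ P.trace = (n : ℂ) := by
    rw [mem_halfTraceProjections_sum_iff, Fintype.card_fin]
  have hmaps : Set.MapsTo φ (halfTraceProjections (Fin n ⊕ Fin n))
      (halfTraceProjections (Fin n ⊕ Fin n)) := fun P hP =>
    have ⟨hadj, hidem, htrace⟩ := hmemS.1 hP
    hmemS.2 (hmem P hadj hidem htrace)
  have hsurjOn : Set.SurjOn φ (halfTraceProjections (Fin n ⊕ Fin n))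
      (halfTraceProjections (Fin n ⊕ Fin n)) := fun Q hQ =>
    have ⟨hadj, hidem, htrace⟩ := hmemS.1 hQ
    have ⟨P, hadj', hidem', htrace', hPQ⟩ := hsurj Q hadj hidem htrace
    ⟨P, hmemS.2 ⟨hadj', hidem', htrace'⟩, hPQ⟩
  have hφ : IsLpIsometryOn p φ (halfTraceProjections (Fin n ⊕ Fin n)) := fun P hP Q hQ =>
    have ⟨hadj, hidem, htrace⟩ := hmemS.1 hP
    have ⟨hadj', hidem', htrace'⟩ := hmemS.1 hQ
    hiso P Q hadj hidem htrace hadj' hidem' htrace'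
  have ⟨ψ, hψ, hψsurj, hψiso, hφψ⟩ :=
    hφ.exists_isLpIsometryOn_unitaryGroup hp hmaps hsurjOn hfix
  exact ⟨ψ, fun _ hV => hψ hV, fun _ hV => hψsurj hV, fun _ hV _ hV' => hψiso hV hV', hφψ⟩
end
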